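/- arXiv:1103.6015 — 4 statements merged into one kernel-verified Lean document; each statement's English description precedes it below -/
import Mathlib

section
/- Let n, d₁, d₂, d₃ ≥ 1 and μ, M₁, M₂ ∈ ℝ. Let a : ℝⁿ × ℝ^{d₁} → ℂ be smooth with |∂_x^γ ∂_{ξ′}^α a(x,ξ′)| ≤ C_{α,γ} ⟨ξ′⟩^{μ−|α|} for all arguments and multi-indices, and let b : ℝⁿ × ℝ^{d₂} × ℝ^{d₃} → ℂ be smooth with |∂_x^γ ∂_{ξ″}^β ∂_{ξ‴}^η b(x,ξ″,ξ‴)| ≤ C_{β,η,γ} ⟨(ξ″,ξ‴)⟩^{M₁−|β|} ⟨ξ‴⟩^{M₂−|η|} for all arguments and multi-indices, where ⟨·⟩ := (1+|·|²)^{1/2}. Then for all multi-indices there are constants C′ such that for all (x, ξ′, ξ″, ξ‴) with |(ξ″,ξ‴)| ≤ |ξ′|: |∂_x^γ ∂_{ξ′}^α ∂_{ξ″}^β ∂_{ξ‴}^η (a(x,ξ′) b(x,ξ″,ξ‴))| ≤ C′ ⟨(ξ′,ξ″,ξ‴)⟩^{μ−|α|} ⟨(ξ″,ξ‴)⟩^{M₁−|β|}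 ⟨ξ‴⟩^{M₂−|η|}. -/
set_option synthInstance.maxHeartbeats 1000000
set_option maxHeartbeats 1000000

/-- The Japanese bracket `⟨v⟩ = (1 + |v|²)^{1/2}`. -/
noncomputable def jap {d : ℕ} (v : EuclideanSpace ℝ (Fin d)) : ℝ :=
  Real.sqrt (1 + ‖v‖ ^ 2)

/-- The Japanese bracket of a pair. -/
noncomputable def jap2 {d e : ℕ} (u : EuclideanSpace ℝ (Fin d))
    (v : EuclideanSpace ℝ (Fin e)) : ℝ :=
  Real.sqrt (1 + ‖u‖ ^ 2 + ‖v‖ ^ 2)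

/-- The Japanese bracket of a triple. -/
noncomputable def jap3 {d e f : ℕ} (u : EuclideanSpace ℝ (Fin d))
    (v : EuclideanSpace ℝ (Fin e)) (w : EuclideanSpace ℝ (Fin f)) : ℝ :=
  Real.sqrt (1 + ‖u‖ ^ 2 + ‖v‖ ^ 2 + ‖w‖ ^ 2)

set_option maxSynthPendingDepth 3 in
theorem contDiff_lie_comp {X U V : Type*} [NormedAddCommGroup X] [NormedSpace ℝ X]
    [NormedAddCommGroup U] [NormedSpace ℝ U] [NormedAddCommGroup V] [NormedSpace ℝ V]
    (L : U ≃ₗᵢ[ℝ] V) (f : X → U) (hf : ContDiff ℝ (⊤ : ℕ∞) f) :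
    ContDiff ℝ (⊤ : ℕ∞) (fun x => L (f x)) := L.contDiff.comp hf

set_option maxSynthPendingDepth 3 in
theorem contDiff_param_iteratedFDeriv {P E G : Type*} [NormedAddCommGroup P] [NormedSpace ℝ P]
    [NormedAddCommGroup E] [NormedSpace ℝ E] [NormedAddCommGroup G] [NormedSpace ℝ G]
    (f : P → E → G) (hf : ContDiff ℝ (⊤ : ℕ∞) (fun p : P × E => f p.1 p.2)) (k : ℕ) :
    ContDiff ℝ (⊤ : ℕ∞) (fun p : P × E => iteratedFDeriv ℝ k (f p.1) p.2) := by
  induction k with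
  | zero =>
    simp only [iteratedFDeriv_zero_eq_comp, Function.comp_def]
    exact ((continuousMultilinearCurryFin0 ℝ E G).symm.contDiff).comp hf
  | succ k ih =>
    simp only [iteratedFDeriv_succ_eq_comp_left, Function.comp_def]
    refine contDiff_lie_comp (continuousMultilinearCurryLeftEquiv ℝ (fun _ : Fin (k + 1) => E) G).symm _ ?_
    refine ContDiff.fderiv (f := fun (p : P × E) (y : E) => iteratedFDeriv ℝ k (f p.1) y)
      (g := fun p : P × E => p.2) (m := (⊤ : ℕ∞)) ?_ contDiff_snd (by simp)
    exact ih.comp ((contDiff_fst.comp contDiff_fst).prodMk contDiff_snd)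

set_option maxSynthPendingDepth 3 in
theorem exists_bilin_const {X U V W : Type*} [NormedAddCommGroup X] [NormedSpace ℝ X]
    [NormedAddCommGroup U] [NormedSpace ℝ U] [NormedAddCommGroup V] [NormedSpace ℝ V]
    [NormedAddCommGroup W] [NormedSpace ℝ W]
    (B : U →L[ℝ] V →L[ℝ] W) (γ : ℕ) :
    ∃ K : ℝ, 0 ≤ K ∧ ∀ (f : X → U) (g : X → V) (x : X),
      ContDiff ℝ (⊤ : ℕ∞) f → ContDiff ℝ (⊤ : ℕ∞) g →
      ‖iteratedFDeriv ℝ γ (fun x => B (f x) (g x)) x‖ ≤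
      K * ∑ i ∈ Finset.range (γ + 1), (γ.choose i : ℝ) *
        ‖iteratedFDeriv ℝ i f x‖ * ‖iteratedFDeriv ℝ (γ - i) g x‖ :=
  ⟨‖B‖, norm_nonneg _, fun _ _ x hf hg =>
    B.norm_iteratedFDeriv_le_of_bilinear hf hg x (n := γ) (by exact_mod_cast le_top)⟩

set_option maxSynthPendingDepth 3 in
theorem exists_leibniz_const {X E V : Type*} [NormedAddCommGroup X] [NormedSpace ℝ X]
    [NormedAddCommGroup E] [NormedSpace ℝ E] [NormedAddCommGroup V] [NormedSpace ℝ V]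
    (S : ℂ →L[ℝ] V →L[ℝ] V) (α γ : ℕ) :
    ∃ K : ℝ, 0 ≤ K ∧ ∀ (a : X → E → ℂ) (g : X → V) (x : X) (ξ : E),
      ContDiff ℝ (⊤ : ℕ∞) (fun p : X × E => a p.1 p.2) → ContDiff ℝ (⊤ : ℕ∞) g →
      ‖iteratedFDeriv ℝ γ (fun x => iteratedFDeriv ℝ α (fun ξ => S (a x ξ) (g x)) ξ) x‖ ≤
      K * ∑ i ∈ Finset.range (γ + 1), (γ.choose i : ℝ) *
        ‖iteratedFDeriv ℝ i (fun x => iteratedFDeriv ℝ α (fun ξ => a x ξ) ξ) x‖ *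
        ‖iteratedFDeriv ℝ (γ - i) g x‖ := by
  let B : ContinuousMultilinearMap ℝ (fun _ : Fin α => E) ℂ →L[ℝ] V →L[ℝ]
      ContinuousMultilinearMap ℝ (fun _ : Fin α => E) V :=
    ((ContinuousLinearMap.compContinuousMultilinearMapL ℝ (fun _ : Fin α => E) ℂ V).comp
      (S.flip)).flip
  obtain ⟨K, hK, hB⟩ := exists_bilin_const (X := X) B γ
  refine ⟨K, hK, fun a g x ξ ha hg => ?_⟩
  have e : (fun x => iteratedFDeriv ℝ α (fun ξ => S (a x ξ) (g x)) ξ) =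
      fun x => B (iteratedFDeriv ℝ α (fun ξ => a x ξ) ξ) (g x) := by
    funext y
    have hay : ContDiff ℝ (⊤ : ℕ∞) (fun ξ => a y ξ) :=
      ha.comp (contDiff_const.prodMk contDiff_id)
    exact ContinuousLinearMap.iteratedFDeriv_comp_left
      (S.flip (g y))
      (f := fun ξ => a y ξ) (x := ξ) hay.contDiffAt (i := α) (by exact_mod_cast le_top)
  rw [e]
  have hA : ContDiff ℝ (⊤ : ℕ∞) (fun x => iteratedFDeriv ℝ α (fun ξ => a x ξ) ξ) :=
    (contDiff_param_iteratedFDeriv a ha α).comp (contDiff_id.prodMk contDiff_const)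
  exact hB _ _ x hA hg

theorem exists_jap_le {d e f : ℕ} (s : ℝ) : ∃ K : ℝ, 0 ≤ K ∧
    ∀ (u : EuclideanSpace ℝ (Fin d)) (v : EuclideanSpace ℝ (Fin e))
      (w : EuclideanSpace ℝ (Fin f)), Real.sqrt (‖v‖ ^ 2 + ‖w‖ ^ 2) ≤ ‖u‖ →
      jap u ^ s ≤ K * jap3 u v w ^ s := by
  refine ⟨max 1 (Real.sqrt 2 ^ (-s)), by positivity, fun u v w h => ?_⟩
  have h2 : ‖v‖ ^ 2 + ‖w‖ ^ 2 ≤ ‖u‖ ^ 2 := (Real.sqrt_le_left (norm_nonneg _)).1 h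
  have p1 : 0 < jap u := Real.sqrt_pos.2 (by positivity)
  have p3 : 0 < jap3 u v w := Real.sqrt_pos.2 (by positivity)
  have l1 : jap u ≤ jap3 u v w := Real.sqrt_le_sqrt (by nlinarith [sq_nonneg ‖v‖, sq_nonneg ‖w‖])
  have l2 : jap3 u v w ≤ Real.sqrt 2 * jap u := by
    unfold jap jap3
    rw [← Real.sqrt_mul (by norm_num)]
    exact Real.sqrt_le_sqrt (by nlinarith)
  have q : 0 ≤ jap3 u v w ^ s := by positivity
  rcases le_total 0 s with hs | hs
  · calc jap u ^ s ≤ jap3 u v w ^ s := Real.rpow_le_rpow p1.le l1 hs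
      _ = 1 * jap3 u v w ^ s := (one_mul _).symm
      _ ≤ _ := mul_le_mul_of_nonneg_right (le_max_left _ _) q
  · have h3 := Real.rpow_le_rpow_of_nonpos p3 l2 hs
    rw [Real.mul_rpow (by positivity) p1.le] at h3
    have h4 : Real.sqrt 2 ^ (-s) * Real.sqrt 2 ^ s = 1 := by
      rw [← Real.rpow_add (by positivity)]; simp
    calc jap u ^ s = Real.sqrt 2 ^ (-s) * (Real.sqrt 2 ^ s * jap u ^ s) := by
          rw [← mul_assoc, h4, one_mul]
      _ ≤ Real.sqrt 2 ^ (-s) * jap3 u v w ^ s := by gcongr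
      _ ≤ _ := mul_le_mul_of_nonneg_right (le_max_right _ _) q

/-- Product of a symbol of order `μ` in `ξ′` and a symbol-valued symbol of order
`(M₁,M₂)` in `(ξ″,ξ‴)` is a triple symbol-valued symbol of order `(μ,M₁,M₂)` on the
region `|(ξ″,ξ‴)| ≤ |ξ′|`. -/
theorem stmt11 (n d₁ d₂ d₃ : ℕ) (hn : 1 ≤ n) (hd₁ : 1 ≤ d₁) (hd₂ : 1 ≤ d₂)
    (hd₃ : 1 ≤ d₃) (μ M₁ M₂ : ℝ)
    (a : EuclideanSpace ℝ (Fin n) → EuclideanSpace ℝ (Fin d₁) → ℂ)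
    (b : EuclideanSpace ℝ (Fin n) → EuclideanSpace ℝ (Fin d₂) →
      EuclideanSpace ℝ (Fin d₃) → ℂ)
    (ha_smooth : ContDiff ℝ (⊤ : ℕ∞)
      (fun p : EuclideanSpace ℝ (Fin n) × EuclideanSpace ℝ (Fin d₁) => a p.1 p.2))
    (hb_smooth : ContDiff ℝ (⊤ : ℕ∞)
      (fun p : EuclideanSpace ℝ (Fin n) × EuclideanSpace ℝ (Fin d₂) ×
          EuclideanSpace ℝ (Fin d₃) => b p.1 p.2.1 p.2.2))
    (ha : ∀ γ α : ℕ, ∃ C : ℝ, ∀ x ξ',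
      ‖iteratedFDeriv ℝ γ (fun x => iteratedFDeriv ℝ α (fun ξ' => a x ξ') ξ') x‖ ≤
        C * jap ξ' ^ (μ - (α : ℝ)))
    (hb : ∀ γ β η : ℕ, ∃ C : ℝ, ∀ x ξ'' ξ''',
      ‖iteratedFDeriv ℝ γ (fun x => iteratedFDeriv ℝ β (fun ξ'' =>
          iteratedFDeriv ℝ η (fun ξ''' => b x ξ'' ξ''') ξ''') ξ'') x‖ ≤
        C * jap2 ξ'' ξ''' ^ (M₁ - (β : ℝ)) * jap ξ''' ^ (M₂ - (η : ℝ))) :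
    ∀ γ α β η : ℕ, ∃ C' : ℝ, ∀ x ξ' ξ'' ξ''',
      Real.sqrt (‖ξ''‖ ^ 2 + ‖ξ'''‖ ^ 2) ≤ ‖ξ'‖ →
      ‖iteratedFDeriv ℝ γ (fun x => iteratedFDeriv ℝ α (fun ξ' =>
          iteratedFDeriv ℝ β (fun ξ'' => iteratedFDeriv ℝ η (fun ξ''' =>
            a x ξ' * b x ξ'' ξ''') ξ''') ξ'') ξ') x‖ ≤
        C' * jap3 ξ' ξ'' ξ''' ^ (μ - (α : ℝ)) * jap2 ξ'' ξ''' ^ (M₁ - (β : ℝ)) *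
          jap ξ''' ^ (M₂ - (η : ℝ)) := by
  intro γ α β η
  choose Ca hCa using ha
  choose Cb hCb using hb
  obtain ⟨K, hK, hL⟩ := exists_leibniz_const (X := EuclideanSpace ℝ (Fin n))
    (E := EuclideanSpace ℝ (Fin d₁))
    (V := ContinuousMultilinearMap ℝ (fun _ : Fin β => EuclideanSpace ℝ (Fin d₂))
      (ContinuousMultilinearMap ℝ (fun _ : Fin η => EuclideanSpace ℝ (Fin d₃)) ℂ))
    (ContinuousLinearMap.lsmul ℝ ℂ) α γ
  obtain ⟨K', hK', hJ⟩ := exists_jap_le (d := d₁) (e := d₂) (f := d₃) (μ - (α : ℝ))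
  refine ⟨K * (∑ i ∈ Finset.range (γ + 1), (γ.choose i : ℝ) * |Ca i α| * |Cb (γ - i) β η|) * K',
    fun x ξ' ξ'' ξ''' h => ?_⟩
  have hη : ContDiff ℝ (⊤ : ℕ∞) (fun p : (EuclideanSpace ℝ (Fin n) × EuclideanSpace ℝ (Fin d₂)) ×
      EuclideanSpace ℝ (Fin d₃) => iteratedFDeriv ℝ η (fun z => b p.1.1 p.1.2 z) p.2) :=
    contDiff_param_iteratedFDeriv
      (fun (q : EuclideanSpace ℝ (Fin n) × EuclideanSpace ℝ (Fin d₂)) z => b q.1 q.2 z)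
      (hb_smooth.comp ((contDiff_fst.comp contDiff_fst).prodMk
        ((contDiff_snd.comp contDiff_fst).prodMk contDiff_snd))) η
  have hη' : ContDiff ℝ (⊤ : ℕ∞) (fun p : EuclideanSpace ℝ (Fin n) × EuclideanSpace ℝ (Fin d₂) =>
      iteratedFDeriv ℝ η (fun z => b p.1 p.2 z) ξ''') :=
    hη.comp (contDiff_id.prodMk contDiff_const)
  have hg : ContDiff ℝ (⊤ : ℕ∞) (fun x => iteratedFDeriv ℝ β (fun ξ'' =>
      iteratedFDeriv ℝ η (fun z => b x ξ'' z) ξ''') ξ'') :=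
    (contDiff_param_iteratedFDeriv
      (fun x ξ'' => iteratedFDeriv ℝ η (fun z => b x ξ'' z) ξ''') hη' β).comp
      (contDiff_id.prodMk contDiff_const)
  have e : (fun x => iteratedFDeriv ℝ α (fun ξ' =>
          iteratedFDeriv ℝ β (fun ξ'' => iteratedFDeriv ℝ η (fun ξ''' =>
            a x ξ' * b x ξ'' ξ''') ξ''') ξ'') ξ') =
      fun x => iteratedFDeriv ℝ α (fun ξ' => a x ξ' • iteratedFDeriv ℝ β (fun ξ'' =>
        iteratedFDeriv ℝ η (fun ξ''' => b x ξ'' ξ''') ξ''') ξ'') ξ' := by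
    funext y
    congr 1
    funext t
    have e1 : (fun ξ'' => iteratedFDeriv ℝ η (fun ξ''' => a y t * b y ξ'' ξ''') ξ''') =
        fun ξ'' => a y t • iteratedFDeriv ℝ η (fun ξ''' => b y ξ'' ξ''') ξ''' := by
      funext s
      have hs : ContDiff ℝ (⊤ : ℕ∞) (fun z => b y s z) :=
        hb_smooth.comp (contDiff_const.prodMk (contDiff_const.prodMk contDiff_id))
      exact iteratedFDeriv_const_smul_apply' (R := ℂ) (a := a y t)
        (hs.of_le (by exact_mod_cast le_top)).contDiffAt
    rw [e1]
    have hs : ContDiff ℝ (⊤ : ℕ∞) (fun s => iteratedFDeriv ℝ η (fun z => b y s z) ξ''') :=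
      hη'.comp (contDiff_const.prodMk contDiff_id)
    exact iteratedFDeriv_const_smul_apply' (R := ℂ) (a := a y t)
      (hs.of_le (by exact_mod_cast le_top)).contDiffAt
  rw [e]
  refine (hL a _ x ξ' ha_smooth hg).trans ?_
  have p1 : 0 < jap ξ' := Real.sqrt_pos.2 (by positivity)
  have p2 : 0 < jap2 ξ'' ξ''' := Real.sqrt_pos.2 (by positivity)
  have p3 : 0 < jap ξ''' := Real.sqrt_pos.2 (by positivity)
  set J1 := jap ξ' ^ (μ - (α : ℝ)) with hJ1
  set J2 := jap2 ξ'' ξ''' ^ (M₁ - (β : ℝ)) with hJ2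
  set J3 := jap ξ''' ^ (M₂ - (η : ℝ)) with hJ3
  have q1 : 0 ≤ J1 := by positivity
  have q2 : 0 ≤ J2 := by positivity
  have q3 : 0 ≤ J3 := by positivity
  calc _ ≤ K * ∑ i ∈ Finset.range (γ + 1), (γ.choose i : ℝ) * (|Ca i α| * J1) *
          (|Cb (γ - i) β η| * J2 * J3) := by
        refine mul_le_mul_of_nonneg_left (Finset.sum_le_sum fun i _ => ?_) hK
        have t1 := (hCa i α x ξ').trans (mul_le_mul_of_nonneg_right (le_abs_self _) q1)
        have t2 : _ ≤ |Cb (γ - i) β η| * J2 * J3 := (hCb (γ - i) β η x ξ'' ξ''').trans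
          (mul_le_mul_of_nonneg_right (mul_le_mul_of_nonneg_right (le_abs_self _) q2) q3)
        exact mul_le_mul (mul_le_mul_of_nonneg_left t1 (by positivity)) t2 (norm_nonneg _)
          (by positivity)
    _ = K * (∑ i ∈ Finset.range (γ + 1), (γ.choose i : ℝ) * |Ca i α| * |Cb (γ - i) β η|) *
          J1 * J2 * J3 := by
        simp only [Finset.mul_sum, Finset.sum_mul]
        exact Finset.sum_congr rfl fun i _ => by ring
    _ ≤ K * (∑ i ∈ Finset.range (γ + 1), (γ.choose i : ℝ) * |Ca i α| * |Cb (γ - i) β η|) *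
          (K' * jap3 ξ' ξ'' ξ''' ^ (μ - (α : ℝ))) * J2 * J3 := by
        have := hJ ξ' ξ'' ξ''' h
        gcongr
    _ = _ := by ring
end

section
/- Let n, d₁, d₂ ≥ 1, M₁ ∈ ℝ, M₂ ≤ 0, and let a : ℝⁿ × ℝ^{d₁} × ℝ^{d₂} → ℂ be smooth and satisfy, for all multi-indices α, β, γ, |∂_x^γ ∂_{ξ′}^α ∂_{ξ″}^β a(x,ξ′,ξ″)| ≤ C_{α,β,γ} ⟨(ξ′,ξ″)⟩^{M₁−|α|} ⟨ξ″⟩^{M₂−|β|} for all arguments, where ⟨·⟩ := (1+|·|²)^{1/2}. Then for every multi-index α in the joint variable ξ = (ξ′,ξ″) and every γ there is C′ such that on the region {⟨ξ″⟩² ≥ ⟨(ξ′,ξ″)⟩}: |∂_x^γ ∂_ξ^α a(x,ξ)| ≤ C′ ⟨ξ⟩^{M₁ + M₂/2 − |α|/2}; that is, a satisfies a symbol estimate of type (1/2,1/2) and order M₁ + M₂/2 there. -/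
section Helpers

variable {P : Type*} [NormedAddCommGroup P] [NormedSpace ℝ P]
  {V : Type*} [NormedAddCommGroup V] [NormedSpace ℝ V]
  {W : Type*} [NormedAddCommGroup W] [NormedSpace ℝ W]
  {Y : Type*} [NormedAddCommGroup Y] [NormedSpace ℝ Y]

/-- Iterated directional derivative along a list of vectors. -/
noncomputable def dirD : List P → (P → V) → P → V
  | [], G => G
  | v :: l, G => fun p => fderiv ℝ (dirD l G) p v

theorem dirD_contDiff (l : List P) {G : P → V} (hG : ContDiff ℝ (⊤ : ℕ∞) G) :
    ContDiff ℝ (⊤ : ℕ∞) (dirD l G) := by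
  induction l with
  | nil => exact hG
  | cons v l ih =>
    exact (ih.fderiv_right (m := ((⊤ : ℕ∞) : WithTop ℕ∞)) (by simp)).clm_apply contDiff_const

theorem dirD_append (l k : List P) (G : P → V) :
    dirD (l ++ k) G = dirD l (dirD k G) := by
  induction l with
  | nil => rfl
  | cons v l ih => simp only [List.cons_append, dirD, ih]

theorem dirD_clm (L : V →L[ℝ] W) (l : List P) {G : P → V} (hG : ContDiff ℝ (⊤ : ℕ∞) G) :
    dirD l (fun p => L (G p)) = fun p => L (dirD l G p) := by
  induction l with
  | nil => rfl
  | cons v l ih =>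
    funext p
    have h : DifferentiableAt ℝ (dirD l G) p :=
      ((dirD_contDiff l hG).differentiable (by simp)) p
    have h2 := (L.hasFDerivAt (x := dirD l G p)).comp p h.hasFDerivAt
    simp only [dirD, ih]
    have h3 := h2.fderiv
    simp only [Function.comp_def] at h3
    rw [h3]; rfl

theorem dirD_cons_cons (v w : P) (l : List P) {G : P → V} (hG : ContDiff ℝ (⊤ : ℕ∞) G) (p : P) :
    dirD (v :: w :: l) G p = fderiv ℝ (fderiv ℝ (dirD l G)) p v w := by
  have hs := (dirD_contDiff l hG).fderiv_right (m := ((⊤ : ℕ∞) : WithTop ℕ∞)) (by simp)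
  have h : DifferentiableAt ℝ (fderiv ℝ (dirD l G)) p := (hs.differentiable (by simp)) p
  simp only [dirD]
  rw [fderiv_clm_apply h (differentiableAt_const w)]
  simp

theorem dirD_perm {l k : List P} (h : l.Perm k) {G : P → V} (hG : ContDiff ℝ (⊤ : ℕ∞) G) :
    dirD l G = dirD k G := by
  induction h with
  | nil => rfl
  | cons v _ ih => simp only [dirD, ih]
  | swap v w l =>
    funext p
    rw [dirD_cons_cons _ _ _ hG, dirD_cons_cons _ _ _ hG]
    have : IsSymmSndFDerivAt ℝ (dirD l G) p :=
      (dirD_contDiff l hG).contDiffAt.isSymmSndFDerivAt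
        (by rw [minSmoothness_of_isRCLikeNormedField]; exact WithTop.coe_le_coe.2 (le_top : (2 : ℕ∞) ≤ ⊤))
    exact this _ _
  | trans _ _ h1 h2 => exact h1.trans h2

theorem iter_apply (k : ℕ) {G : P → V} (hG : ContDiff ℝ (⊤ : ℕ∞) G) (p : P) (m : Fin k → P) :
    iteratedFDeriv ℝ k G p m = dirD (List.ofFn m) G p := by
  induction k generalizing p with
  | zero => simp [dirD]
  | succ k ih =>
    have h : DifferentiableAt ℝ (iteratedFDeriv ℝ k G) p :=
      (hG.differentiable_iteratedFDeriv (by exact_mod_cast WithTop.coe_lt_top k)) p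
    rw [iteratedFDeriv_succ_apply_left, List.ofFn_succ]
    simp only [dirD]
    have e : dirD (List.ofFn fun i : Fin k => m i.succ) G
        = fun q => ContinuousMultilinearMap.apply ℝ (fun _ : Fin k => P) V (Fin.tail m)
            (iteratedFDeriv ℝ k G q) := by
      funext q
      exact (ih q _).symm
    rw [e]
    have h2 := ((ContinuousMultilinearMap.apply ℝ (fun _ : Fin k => P) V
      (Fin.tail m)).hasFDerivAt (x := iteratedFDeriv ℝ k G p)).comp p h.hasFDerivAt
    have h3 := h2.fderiv
    simp only [Function.comp_def] at h3
    rw [h3]; rfl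

/-- Iterated partial derivative along the subspace `ι`. -/
noncomputable def Pd (ι : Y →L[ℝ] P) (k : ℕ) (G : P → V) (p : P) :
    ContinuousMultilinearMap ℝ (fun _ : Fin k => Y) V :=
  (iteratedFDeriv ℝ k G p).compContinuousLinearMap (fun _ => ι)

theorem Pd_apply (ι : Y →L[ℝ] P) (k : ℕ) {G : P → V} (hG : ContDiff ℝ (⊤ : ℕ∞) G) (p : P)
    (m : Fin k → Y) : Pd ι k G p m = dirD ((List.ofFn m).map ι) G p := by
  rw [List.map_ofFn, ← iter_apply k hG]; rfl

theorem Pd_contDiff (ι : Y →L[ℝ] P) (k : ℕ) {G : P → V} (hG : ContDiff ℝ (⊤ : ℕ∞) G) :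
    ContDiff ℝ (⊤ : ℕ∞) (Pd ι k G) := by
  have h : ContDiff ℝ (⊤ : ℕ∞) (iteratedFDeriv ℝ k G) :=
    hG.iteratedFDeriv_right (by exact_mod_cast le_top)
  exact (ContinuousMultilinearMap.compContinuousLinearMapL (𝕜 := ℝ) (F := V)
    (fun _ : Fin k => ι)).contDiff.comp h

theorem Pd_eq (ι : Y →L[ℝ] P) (k : ℕ) {G : P → V} (hG : ContDiff ℝ (⊤ : ℕ∞) G) (q : P) (g : Y → V)
    (hg : ∀ y, g y = G (q + ι y)) (y : Y) :
    iteratedFDeriv ℝ k g y = Pd ι k G (q + ι y) := by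
  have e : g = (fun r => G (q + r)) ∘ ι := funext hg
  have hG' : ContDiff ℝ (⊤ : ℕ∞) (fun r => G (q + r)) := hG.comp (contDiff_const.add contDiff_id)
  rw [e, ι.iteratedFDeriv_comp_right hG' y (by exact_mod_cast le_top), iteratedFDeriv_comp_add_left]
  rfl

theorem dirD_Pd (ι : Y →L[ℝ] P) (k : ℕ) {G : P → V} (hG : ContDiff ℝ (⊤ : ℕ∞) G) (p : P)
    (l : List P) (m : Fin k → Y) :
    dirD l (Pd ι k G) p m = dirD (l ++ (List.ofFn m).map ι) G p := by
  have h := dirD_clm (ContinuousMultilinearMap.apply ℝ (fun _ : Fin k => Y) V m) l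
    (Pd_contDiff ι k hG)
  have h1 := congrFun h p
  have e : (fun p => ContinuousMultilinearMap.apply ℝ (fun _ : Fin k => Y) V m (Pd ι k G p))
      = dirD ((List.ofFn m).map ι) G := by
    funext p; exact Pd_apply ι k hG p m
  rw [e] at h1
  rw [dirD_append, h1]; rfl

variable {X : Type*} [NormedAddCommGroup X] [NormedSpace ℝ X]
  {Z : Type*} [NormedAddCommGroup Z] [NormedSpace ℝ Z]

theorem prod_ofFn_norm {k : ℕ} (m : Fin k → Y) :
    ((List.ofFn m).map (fun y => ‖y‖)).prod = ∏ i, ‖m i‖ := by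
  rw [List.map_ofFn, List.prod_ofFn]; rfl

theorem exists_ofFn (l : List Y) {k : ℕ} (h : l.length = k) : ∃ m : Fin k → Y, l = List.ofFn m := by
  subst h; exact ⟨l.get, (List.ofFn_get l).symm⟩

theorem triple_bound (i₁ : X →L[ℝ] P) (i₂ : Y →L[ℝ] P) (i₃ : Z →L[ℝ] P)
    {G : P → V} (hG : ContDiff ℝ (⊤ : ℕ∞) G) (p : P) (K : ℝ) {γ α β : ℕ}
    (hK : ‖Pd i₁ γ (Pd i₂ α (Pd i₃ β G)) p‖ ≤ K)
    (us : List X) (ys : List Y) (zs : List Z)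
    (hu : us.length = γ) (hy : ys.length = α) (hz : zs.length = β) :
    ‖dirD (us.map i₁ ++ ys.map i₂ ++ zs.map i₃) G p‖ ≤
      K * (us.map (fun y => ‖y‖)).prod * (ys.map (fun y => ‖y‖)).prod *
        (zs.map (fun y => ‖y‖)).prod := by
  obtain ⟨u, rfl⟩ := exists_ofFn us hu
  obtain ⟨y, rfl⟩ := exists_ofFn ys hy
  obtain ⟨z, rfl⟩ := exists_ofFn zs hz
  have h3 := Pd_contDiff i₃ β hG
  have h2 := Pd_contDiff i₂ α h3
  rw [← dirD_Pd i₃ β hG, ← dirD_Pd i₂ α h3, ← Pd_apply i₁ γ h2]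
  simp only [prod_ofFn_norm]
  refine (ContinuousMultilinearMap.le_opNorm _ _).trans ?_
  gcongr
  refine (ContinuousMultilinearMap.le_opNorm _ _).trans ?_
  gcongr
  refine (ContinuousMultilinearMap.le_opNorm _ _).trans ?_
  gcongr

theorem split_bound (i₁ : X →L[ℝ] P) (i₂ : Y →L[ℝ] P) (i₃ : Z →L[ℝ] P)
    {G : P → V} (hG : ContDiff ℝ (⊤ : ℕ∞) G) (p : P) (K : ℝ) {γ N : ℕ}
    (hK : ∀ α β : ℕ, α + β = N → ‖Pd i₁ γ (Pd i₂ α (Pd i₃ β G)) p‖ ≤ K)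
    (us : List X) (hu : us.length = γ) (l : List (Y × Z)) :
    ∀ (ys : List Y) (zs : List Z), l.length + ys.length + zs.length = N →
    ‖dirD (l.map (i₂.coprod i₃) ++ (us.map i₁ ++ ys.map i₂ ++ zs.map i₃)) G p‖ ≤
      2 ^ l.length * K * (us.map (fun y => ‖y‖)).prod * (ys.map (fun y => ‖y‖)).prod *
        (zs.map (fun y => ‖y‖)).prod * (l.map (fun y => ‖y‖)).prod := by
  have hK0 : 0 ≤ K := (norm_nonneg _).trans (hK N 0 (by simp))
  have hp2 : 0 ≤ (us.map (fun y => ‖y‖)).prod := by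
    apply List.prod_nonneg
    simp
  induction l with
  | nil =>
    intro ys zs h
    simpa using triple_bound i₁ i₂ i₃ hG p K (hK _ _ (by simpa using h)) us ys zs hu rfl rfl
  | cons v l ih =>
    intro ys zs h
    have hl : 0 ≤ (l.map (fun y => ‖y‖)).prod := by
      apply List.prod_nonneg
      intro a ha
      obtain ⟨y, _, rfl⟩ := List.mem_map.1 ha
      exact norm_nonneg y
    have hys : 0 ≤ (ys.map (fun y => ‖y‖)).prod := by
      apply List.prod_nonneg
      simp
    have hzs : 0 ≤ (zs.map (fun y => ‖y‖)).prod := by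
      apply List.prod_nonneg
      simp
    have h1 := ih (v.1 :: ys) zs (by simp at h ⊢; omega)
    have h2 := ih ys (v.2 :: zs) (by simp at h ⊢; omega)
    have e1 : dirD (i₂ v.1 :: (l.map (i₂.coprod i₃) ++ (us.map i₁ ++ ys.map i₂ ++ zs.map i₃))) G
        = dirD (l.map (i₂.coprod i₃) ++ (us.map i₁ ++ (v.1 :: ys).map i₂ ++ zs.map i₃)) G := by
      apply dirD_perm _ hG
      simpa using (List.perm_middle (a := i₂ v.1) (l₁ := l.map (i₂.coprod i₃) ++ us.map i₁)
        (l₂ := ys.map i₂ ++ zs.map i₃)).symm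
    have e2 : dirD (i₃ v.2 :: (l.map (i₂.coprod i₃) ++ (us.map i₁ ++ ys.map i₂ ++ zs.map i₃))) G
        = dirD (l.map (i₂.coprod i₃) ++ (us.map i₁ ++ ys.map i₂ ++ (v.2 :: zs).map i₃)) G := by
      apply dirD_perm _ hG
      simpa using (List.perm_middle (a := i₃ v.2)
        (l₁ := l.map (i₂.coprod i₃) ++ us.map i₁ ++ ys.map i₂)
        (l₂ := zs.map i₃)).symm
    have e : dirD ((v :: l).map (i₂.coprod i₃) ++ (us.map i₁ ++ ys.map i₂ ++ zs.map i₃)) G p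
        = dirD (l.map (i₂.coprod i₃) ++ (us.map i₁ ++ (v.1 :: ys).map i₂ ++ zs.map i₃)) G p
        + dirD (l.map (i₂.coprod i₃) ++ (us.map i₁ ++ ys.map i₂ ++ (v.2 :: zs).map i₃)) G p := by
      rw [← e1, ← e2]
      simp [dirD]
    rw [e]
    refine (norm_add_le _ _).trans ((add_le_add h1 h2).trans ?_)
    simp only [List.map_cons, List.prod_cons, List.length_cons]
    have n1 := norm_fst_le v
    have n2 := norm_snd_le v
    set A := (us.map (fun y => ‖y‖)).prod
    set B := (ys.map (fun y => ‖y‖)).prod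
    set C := (zs.map (fun y => ‖y‖)).prod
    set D := (l.map (fun y => ‖y‖)).prod
    have hQ : 0 ≤ 2 ^ l.length * K * A * B * C * D := by positivity
    calc _ = (2 ^ l.length * K * A * B * C * D) * (‖v.1‖ + ‖v.2‖) := by ring
      _ ≤ (2 ^ l.length * K * A * B * C * D) * (‖v‖ + ‖v‖) := by gcongr
      _ = _ := by ring

theorem joint_bound (i₁ : X →L[ℝ] P) (i₂ : Y →L[ℝ] P) (i₃ : Z →L[ℝ] P)
    {G : P → V} (hG : ContDiff ℝ (⊤ : ℕ∞) G) (p : P) (K : ℝ) {γ N : ℕ}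
    (hK : ∀ α β : ℕ, α + β = N → ‖Pd i₁ γ (Pd i₂ α (Pd i₃ β G)) p‖ ≤ K) :
    ‖Pd i₁ γ (Pd (i₂.coprod i₃) N G) p‖ ≤ 2 ^ N * K := by
  have hK0 : 0 ≤ K := (norm_nonneg _).trans (hK N 0 (by simp))
  refine ContinuousMultilinearMap.opNorm_le_bound (by positivity) fun u => ?_
  refine ContinuousMultilinearMap.opNorm_le_bound (by positivity) fun v => ?_
  have h := split_bound i₁ i₂ i₃ hG p K hK (List.ofFn u) (by simp) (List.ofFn v) [] [] (by simp)
  simp only [prod_ofFn_norm, List.map_nil, List.append_nil, List.prod_nil, mul_one,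
    List.length_ofFn] at h
  rw [Pd_apply _ _ (Pd_contDiff _ _ hG), dirD_Pd _ _ hG, dirD_perm List.perm_append_comm hG]
  exact h

end Helpers

theorem jap_weight {d e : ℕ} (u : EuclideanSpace ℝ (Fin d)) (v : EuclideanSpace ℝ (Fin e))
    (h : jap2 u v ≤ jap v ^ 2) (M₁ M₂ : ℝ) (hM₂ : M₂ ≤ 0) (α β N : ℕ) (hN : α + β = N) :
    jap2 u v ^ (M₁ - (α : ℝ)) * jap v ^ (M₂ - (β : ℝ)) ≤
      jap2 u v ^ (M₁ + M₂ / 2 - (N : ℝ) / 2) := by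
  have h1 : 1 ≤ jap2 u v := by
    unfold jap2
    rw [Real.one_le_sqrt]
    nlinarith [sq_nonneg ‖u‖, sq_nonneg ‖v‖]
  have h0 : 0 < jap2 u v := by linarith
  have hv0 : 0 ≤ jap v := Real.sqrt_nonneg _
  have hb : jap2 u v ^ ((1 : ℝ) / 2) ≤ jap v := by
    rw [← Real.sqrt_eq_rpow]
    exact (Real.sqrt_le_left hv0).2 h
  have hβ : M₂ - (β : ℝ) ≤ 0 := by have : (0 : ℝ) ≤ β := Nat.cast_nonneg β; linarith
  have h2 : jap v ^ (M₂ - (β : ℝ)) ≤ (jap2 u v ^ ((1 : ℝ) / 2)) ^ (M₂ - (β : ℝ)) :=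
    Real.rpow_le_rpow_of_nonpos (by positivity) hb hβ
  rw [← Real.rpow_mul h0.le] at h2
  calc _ ≤ jap2 u v ^ (M₁ - (α : ℝ)) * jap2 u v ^ (1 / 2 * (M₂ - (β : ℝ))) := by gcongr
    _ = jap2 u v ^ (M₁ - (α : ℝ) + 1 / 2 * (M₂ - (β : ℝ))) := (Real.rpow_add h0 _ _).symm
    _ ≤ _ := by
      apply Real.rpow_le_rpow_of_exponent_le h1
      have : (0 : ℝ) ≤ α := Nat.cast_nonneg α
      have hN' : (N : ℝ) = α + β := by rw [← hN]; push_cast; ring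
      rw [hN']
      linarith

/-- On the parabolic region `⟨ξ″⟩² ≥ ⟨(ξ′,ξ″)⟩`, a symbol-valued symbol of order
`(M₁,M₂)` with `M₂ ≤ 0` satisfies a type-`(1/2,1/2)` symbol estimate of order
`M₁ + M₂/2` in the joint variable. -/
theorem stmt13 (n d₁ d₂ : ℕ) (hn : 1 ≤ n) (hd₁ : 1 ≤ d₁) (hd₂ : 1 ≤ d₂)
    (M₁ M₂ : ℝ) (hM₂ : M₂ ≤ 0)
    (a : EuclideanSpace ℝ (Fin n) → EuclideanSpace ℝ (Fin d₁) →
      EuclideanSpace ℝ (Fin d₂) → ℂ)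
    (ha_smooth : ContDiff ℝ (⊤ : ℕ∞)
      (fun p : EuclideanSpace ℝ (Fin n) × EuclideanSpace ℝ (Fin d₁) ×
          EuclideanSpace ℝ (Fin d₂) => a p.1 p.2.1 p.2.2))
    (ha : ∀ γ α β : ℕ, ∃ C : ℝ, ∀ x ξ' ξ'',
      ‖iteratedFDeriv ℝ γ (fun x => iteratedFDeriv ℝ α (fun ξ' =>
          iteratedFDeriv ℝ β (fun ξ'' => a x ξ' ξ'') ξ'') ξ') x‖ ≤
        C * jap2 ξ' ξ'' ^ (M₁ - (α : ℝ)) * jap ξ'' ^ (M₂ - (β : ℝ))) :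
    ∀ γ α : ℕ, ∃ C' : ℝ,
      ∀ (x : EuclideanSpace ℝ (Fin n))
        (ξ : EuclideanSpace ℝ (Fin d₁) × EuclideanSpace ℝ (Fin d₂)),
        jap2 ξ.1 ξ.2 ≤ jap ξ.2 ^ 2 →
      ‖iteratedFDeriv ℝ γ (fun x => iteratedFDeriv ℝ α
          (fun ξ : EuclideanSpace ℝ (Fin d₁) × EuclideanSpace ℝ (Fin d₂) =>
            a x ξ.1 ξ.2) ξ) x‖ ≤
        C' * jap2 ξ.1 ξ.2 ^ (M₁ + M₂ / 2 - (α : ℝ) / 2) := by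
  set F : EuclideanSpace ℝ (Fin n) × EuclideanSpace ℝ (Fin d₁) × EuclideanSpace ℝ (Fin d₂) → ℂ :=
    fun p => a p.1 p.2.1 p.2.2 with hF
  let i₁ : EuclideanSpace ℝ (Fin n) →L[ℝ] EuclideanSpace ℝ (Fin n) × EuclideanSpace ℝ (Fin d₁) ×
    EuclideanSpace ℝ (Fin d₂) := ContinuousLinearMap.inl ℝ _ _
  let j : EuclideanSpace ℝ (Fin d₁) × EuclideanSpace ℝ (Fin d₂) →L[ℝ]
    EuclideanSpace ℝ (Fin n) × EuclideanSpace ℝ (Fin d₁) ×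
    EuclideanSpace ℝ (Fin d₂) := ContinuousLinearMap.inr ℝ _ _
  let i₂ : EuclideanSpace ℝ (Fin d₁) →L[ℝ] EuclideanSpace ℝ (Fin n) × EuclideanSpace ℝ (Fin d₁) ×
    EuclideanSpace ℝ (Fin d₂) := j.comp (ContinuousLinearMap.inl ℝ _ _)
  let i₃ : EuclideanSpace ℝ (Fin d₂) →L[ℝ] EuclideanSpace ℝ (Fin n) × EuclideanSpace ℝ (Fin d₁) ×
    EuclideanSpace ℝ (Fin d₂) := j.comp (ContinuousLinearMap.inr ℝ _ _)
  have key : ∀ γ α β : ℕ, ∀ x y z,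
      iteratedFDeriv ℝ γ (fun x => iteratedFDeriv ℝ α (fun ξ' =>
          iteratedFDeriv ℝ β (fun ξ'' => a x ξ' ξ'') z) y) x
        = Pd i₁ γ (Pd i₂ α (Pd i₃ β F)) (x, y, z) := by
    intro γ α β x y z
    have s3 := Pd_contDiff i₃ β ha_smooth
    have s2 := Pd_contDiff i₂ α s3
    have e3 : ∀ x y, iteratedFDeriv ℝ β (fun ξ'' => a x y ξ'') z = Pd i₃ β F (x, y, z) := by
      intro x y
      rw [Pd_eq i₃ β ha_smooth (x, y, 0) _ (fun z => by simp [hF, i₃, j]) z]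
      simp [i₃, j]
    have e2 : ∀ x, iteratedFDeriv ℝ α (fun ξ' => iteratedFDeriv ℝ β (fun ξ'' => a x ξ' ξ'') z) y
        = Pd i₂ α (Pd i₃ β F) (x, y, z) := by
      intro x
      rw [Pd_eq i₂ α s3 (x, 0, z) _ (fun y => by rw [e3]; simp [i₂, j]) y]
      simp [i₂, j]
    rw [Pd_eq i₁ γ s2 (0, y, z) _ (fun x => by rw [e2]; simp [i₁]) x]
    simp [i₁]
  have hj : i₂.coprod i₃ = j := by
    ext v <;> simp [i₂, i₃, j]
  have key2 : ∀ γ α : ℕ, ∀ x (ξ : EuclideanSpace ℝ (Fin d₁) × EuclideanSpace ℝ (Fin d₂)),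
      iteratedFDeriv ℝ γ (fun x => iteratedFDeriv ℝ α
          (fun ξ : EuclideanSpace ℝ (Fin d₁) × EuclideanSpace ℝ (Fin d₂) =>
            a x ξ.1 ξ.2) ξ) x = Pd i₁ γ (Pd (i₂.coprod i₃) α F) (x, ξ) := by
    intro γ α x ξ
    rw [hj]
    have s2 := Pd_contDiff j α ha_smooth
    have e2 : ∀ x, iteratedFDeriv ℝ α
          (fun ξ : EuclideanSpace ℝ (Fin d₁) × EuclideanSpace ℝ (Fin d₂) =>
            a x ξ.1 ξ.2) ξ = Pd j α F (x, ξ) := by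
      intro x
      rw [Pd_eq j α ha_smooth (x, 0) _ (fun z => by simp [hF, j]) ξ]
      simp [j]
    rw [Pd_eq i₁ γ s2 (0, ξ) _ (fun x => by rw [e2]; simp [i₁]) x]
    simp [i₁]
  intro γ N
  choose C hC using ha γ
  refine ⟨2 ^ N * ∑ i ∈ Finset.range (N + 1), |C i (N - i)|, fun x ξ hξ => ?_⟩
  rw [key2, mul_assoc]
  apply joint_bound i₁ i₂ i₃ ha_smooth
  intro α β hαβ
  have h1 := hC α β x ξ.1 ξ.2
  rw [key] at h1
  refine h1.trans ?_
  have hw := jap_weight ξ.1 ξ.2 hξ M₁ M₂ hM₂ α β N hαβ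
  have hnn : 0 ≤ jap2 ξ.1 ξ.2 ^ (M₁ - (α : ℝ)) * jap ξ.2 ^ (M₂ - (β : ℝ)) :=
    mul_nonneg (Real.rpow_nonneg (Real.sqrt_nonneg _) _) (Real.rpow_nonneg (Real.sqrt_nonneg _) _)
  have hc : C α β ≤ ∑ i ∈ Finset.range (N + 1), |C i (N - i)| := by
    have hb : β = N - α := by omega
    refine (le_abs_self _).trans ?_
    rw [hb]
    exact Finset.single_le_sum (f := fun i => |C i (N - i)|) (fun i _ => abs_nonneg _)
      (Finset.mem_range.2 (by omega))
  rw [mul_assoc]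
  exact mul_le_mul hc hw hnn (Finset.sum_nonneg fun i _ => abs_nonneg _)
end

section
/- Let n, d₁, d₂ ≥ 1, M₁ ∈ ℝ, and M₂ > −d₂. Let a : ℝⁿ × ℝ^{d₁} × ℝ^{d₂} → ℂ be smooth and satisfy, for all multi-indices α, β, γ, |∂_x^γ ∂_{ξ′}^α ∂_{ξ″}^β a(x,ξ′,ξ″)| ≤ C_{α,β,γ} ⟨(ξ′,ξ″)⟩^{M₁−|α|} ⟨ξ″⟩^{M₂−|β|} for all arguments, where ⟨·⟩ := (1+|·|²)^{1/2}, and let ψ ∈ C_c^∞(ℝ^{d₂}). Define b(x,ξ′) := ∫_{ℝ^{d₂}} a(x,ξ′,ξ″) ψ(⟨ξ′⟩^{−1/2} ξ″) dξ″. Then for all multi-indices α, γ there is C′ with |∂_x^γ ∂_{ξ′}^α b(x,ξ′)| ≤ C′ ⟨ξ′⟩^{M₁ + (M₂+d₂)/2 − |α|/2} for all (x,ξ′). -/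
open MeasureTheory

open scoped ContDiff Topology
open Filter

section general

set_option maxSynthPendingDepth 3

variable {E E' G F W₁ W₂ W₃ : Type} [NormedAddCommGroup E] [NormedSpace ℝ E]
  [NormedAddCommGroup E'] [NormedSpace ℝ E']
  [NormedAddCommGroup G] [NormedSpace ℝ G]
  [NormedAddCommGroup F] [NormedSpace ℝ F]
  [NormedAddCommGroup W₁] [NormedSpace ℝ W₁]
  [NormedAddCommGroup W₂] [NormedSpace ℝ W₂]
  [NormedAddCommGroup W₃] [NormedSpace ℝ W₃]

/-- Parametric smoothness of partial derivatives. -/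
lemma contDiff_partial_fderiv {f : E → E' → F} (hf : ContDiff ℝ ∞ (Function.uncurry f)) :
    ContDiff ℝ ∞ (Function.uncurry fun x ξ => fderiv ℝ (f x) ξ) := by
  have h : ContDiff ℝ ∞ (Function.uncurry fun (p : E × E') (ξ : E') => f p.1 ξ) :=
    hf.comp ((contDiff_fst.comp contDiff_fst).prodMk contDiff_snd)
  exact ContDiff.fderiv (n := ∞) h contDiff_snd (by simp)

lemma contDiff_partial_iteratedFDeriv {f : E → E' → F}
    (hf : ContDiff ℝ ∞ (Function.uncurry f)) (k : ℕ) :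
    ContDiff ℝ ∞ (Function.uncurry fun x ξ => iteratedFDeriv ℝ k (f x) ξ) := by
  induction k with
  | zero =>
    exact (continuousMultilinearCurryFin0 ℝ E' F).symm.contDiff.comp hf
  | succ k ih =>
    have := contDiff_partial_fderiv ih
    exact (continuousMultilinearCurryLeftEquiv ℝ (fun _ : Fin (k + 1) => E') F).symm.contDiff.comp
      this

lemma contDiff_slice_left {f : E → E' → F} (hf : ContDiff ℝ ∞ (Function.uncurry f)) (x : E) :
    ContDiff ℝ ∞ (f x) :=
  hf.comp (contDiff_const.prodMk contDiff_id)

lemma contDiff_slice_right {f : E → E' → F} (hf : ContDiff ℝ ∞ (Function.uncurry f)) (ξ : E') :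
    ContDiff ℝ ∞ (fun x => f x ξ) :=
  hf.comp (contDiff_id.prodMk contDiff_const)

lemma norm_mixed_fderiv (f : E → E' → F) (γ α : ℕ) (x : E) (ξ : E') :
    ‖iteratedFDeriv ℝ γ (fun x => iteratedFDeriv ℝ α (fun ξ => fderiv ℝ (f x) ξ) ξ) x‖ =
    ‖iteratedFDeriv ℝ γ (fun x => iteratedFDeriv ℝ (α + 1) (f x) ξ) x‖ := by
  have : (fun x => iteratedFDeriv ℝ (α + 1) (f x) ξ) =
    (continuousMultilinearCurryRightEquiv' ℝ α E' F).symm ∘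
      (fun x => iteratedFDeriv ℝ α (fun ξ => fderiv ℝ (f x) ξ) ξ) := by
    ext1 x
    rw [iteratedFDeriv_succ_eq_comp_right]
    rfl
  rw [this, LinearIsometryEquiv.norm_iteratedFDeriv_comp_left]

/-- Leibniz-type bound for mixed derivatives of a bilinear product. -/
lemma mixed_leibniz (γ : ℕ) {t : ℝ} (ht : 0 ≤ t) (x : E) (ξ : E') (α : ℕ) :
    ∀ (W₁ W₂ W₃ : Type) [NormedAddCommGroup W₁] [NormedSpace ℝ W₁]
      [NormedAddCommGroup W₂] [NormedSpace ℝ W₂]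
      [NormedAddCommGroup W₃] [NormedSpace ℝ W₃]
      (B : W₁ →L[ℝ] W₂ →L[ℝ] W₃) (u : E' → W₁) (a : E → E' → W₂)
      (_ : ContDiff ℝ ∞ u) (_ : ContDiff ℝ ∞ (Function.uncurry a))
      (A K : ℝ) (_ : 0 ≤ A) (_ : 0 ≤ K)
      (_ : ∀ i ≤ α, ‖iteratedFDeriv ℝ i u ξ‖ ≤ A * t ^ i)
      (_ : ∀ j ≤ α, ‖iteratedFDeriv ℝ γ (fun x => iteratedFDeriv ℝ j (a x) ξ) x‖ ≤ K * t ^ j),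
      ‖iteratedFDeriv ℝ γ (fun x => iteratedFDeriv ℝ α (fun ξ => B (u ξ) (a x ξ)) ξ) x‖
        ≤ ‖B‖ * 2 ^ α * A * K * t ^ α := by
  induction α with
  | zero =>
    intro W₁ W₂ W₃ _ _ _ _ _ _ B u a hu ha A K hA hK h1 h2
    have e1 : ∀ {W : Type} [NormedAddCommGroup W] [NormedSpace ℝ W] (f : E → E' → W),
        ‖iteratedFDeriv ℝ γ (fun x => iteratedFDeriv ℝ 0 (f x) ξ) x‖ =
        ‖iteratedFDeriv ℝ γ (fun x => f x ξ) x‖ := by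
      intro W _ _ f
      exact LinearIsometryEquiv.norm_iteratedFDeriv_comp_left
        (continuousMultilinearCurryFin0 ℝ E' W).symm (fun x => f x ξ) x γ
    have h1' := h1 0 le_rfl
    have h2' := h2 0 le_rfl
    rw [e1] at h2'
    rw [norm_iteratedFDeriv_zero] at h1'
    rw [e1 (fun x ξ => B (u ξ) (a x ξ))]
    refine ((B (u ξ)).norm_iteratedFDeriv_comp_left (N := ∞)
      (contDiff_slice_right ha ξ).contDiffAt (by exact_mod_cast le_top)).trans ?_
    simp only [pow_zero, mul_one] at h1' h2' ⊢
    calc _ ≤ (‖B‖ * ‖u ξ‖) * K := by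
          gcongr
          exact B.le_opNorm _
      _ ≤ _ := by gcongr
  | succ α ih =>
    intro W₁ W₂ W₃ _ _ _ _ _ _ B u a hu ha A K hA hK h1 h2
    rw [← norm_mixed_fderiv (fun x ξ => B (u ξ) (a x ξ))]
    have hda := contDiff_partial_fderiv ha
    have hdu : ContDiff ℝ ∞ (fderiv ℝ u) := hu.fderiv_right (by simp)
    have hu2 : ContDiff ℝ ∞ (fun p : E × E' => u p.2) := hu.comp contDiff_snd
    have hdu2 : ContDiff ℝ ∞ (fun p : E × E' => fderiv ℝ u p.2) := hdu.comp contDiff_snd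
    have c1 : ContDiff ℝ ∞ (Function.uncurry fun (x : E) (ξ : E') =>
        B.precompR E' (u ξ) (fderiv ℝ (a x) ξ)) :=
      ((B.precompR E').contDiff.comp hu2 : ContDiff ℝ ∞ (fun p : E × E' => B.precompR E' (u p.2))).clm_apply hda
    have c2 : ContDiff ℝ ∞ (Function.uncurry fun (x : E) (ξ : E') =>
        B.precompL E' (fderiv ℝ u ξ) (a x ξ)) :=
      ((B.precompL E').contDiff.comp hdu2 :
        ContDiff ℝ ∞ (fun p : E × E' => B.precompL E' (fderiv ℝ u p.2))).clm_apply ha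
    have e : ∀ x : E, iteratedFDeriv ℝ α (fun ξ => fderiv ℝ (fun ξ => B (u ξ) (a x ξ)) ξ) ξ =
        iteratedFDeriv ℝ α (fun ξ => B.precompR E' (u ξ) (fderiv ℝ (a x) ξ)) ξ +
        iteratedFDeriv ℝ α (fun ξ => B.precompL E' (fderiv ℝ u ξ) (a x ξ)) ξ := by
      intro x
      have : (fun ξ => fderiv ℝ (fun ξ => B (u ξ) (a x ξ)) ξ) = fun ξ =>
          B.precompR E' (u ξ) (fderiv ℝ (a x) ξ) + B.precompL E' (fderiv ℝ u ξ) (a x ξ) := by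
        ext1 ξ
        exact B.fderiv_of_bilinear (hu.differentiable (by simp) ξ)
          ((contDiff_slice_left ha x).differentiable (by simp) ξ)
      rw [this]
      exact iteratedFDeriv_add_apply
        ((contDiff_slice_left c1 x).contDiffAt.of_le (by exact_mod_cast le_top))
        ((contDiff_slice_left c2 x).contDiffAt.of_le (by exact_mod_cast le_top))
    simp_rw [e]
    have e2 := iteratedFDeriv_add_apply (𝕜 := ℝ) (i := γ) (x := x)
      ((contDiff_slice_right (contDiff_partial_iteratedFDeriv c1 α) ξ).contDiffAt.of_le
        (by exact_mod_cast le_top))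
      ((contDiff_slice_right (contDiff_partial_iteratedFDeriv c2 α) ξ).contDiffAt.of_le
        (by exact_mod_cast le_top))
    have e3 := (congrArg norm e2).le.trans (norm_add_le _ _)
    refine le_trans e3 ?_
    have i1 := ih _ _ _ (B.precompR E') u (fun x ξ => fderiv ℝ (a x) ξ) hu hda A (K * t) hA
      (by positivity) (fun i hi => h1 i (by omega)) (fun j hj => by
        have := h2 (j + 1) (by omega)
        rw [← norm_mixed_fderiv] at this
        rw [mul_assoc, ← pow_succ']
        exact this)
    have i2 := ih _ _ _ (B.precompL E') (fderiv ℝ u) a hdu ha (A * t) K (by positivity)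
      hK (fun i hi => by
        rw [norm_iteratedFDeriv_fderiv, mul_assoc, ← pow_succ']
        exact h1 (i + 1) (by omega)) (fun j hj => h2 j (by omega))
    have n1 := B.norm_precompR_le E'
    have n2 := B.norm_precompL_le E'
    calc _ ≤ ‖B.precompR E'‖ * 2 ^ α * A * (K * t) * t ^ α +
          ‖B.precompL E'‖ * 2 ^ α * (A * t) * K * t ^ α := add_le_add i1 i2
      _ ≤ ‖B‖ * 2 ^ α * A * (K * t) * t ^ α + ‖B‖ * 2 ^ α * (A * t) * K * t ^ α := by gcongr
      _ = _ := by ring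

variable [MeasurableSpace G] [BorelSpace G] [FiniteDimensional ℝ G] [FiniteDimensional ℝ E]

lemma hasFDerivAt_param_integral (μ : Measure G) [IsFiniteMeasureOnCompacts μ]
    {f : E → G → F} (hf : ContDiff ℝ ∞ (Function.uncurry f))
    (hs : ∀ e₀, ∃ R : ℝ, ∀ᶠ e in 𝓝 e₀, ∀ y, R < ‖y‖ → f e y = 0) (e₀ : E) :
    HasFDerivAt (fun e => ∫ y, f e y ∂μ) (∫ y, fderiv ℝ (fun e => f e y) e₀ ∂μ) e₀ := by
  obtain ⟨R, hR⟩ := hs e₀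
  have hproper : ProperSpace E := FiniteDimensional.proper_real E
  have hproper' : ProperSpace G := FiniteDimensional.proper_real G
  have hsw : ContDiff ℝ ∞ (Function.uncurry fun y e => f e y) := hf.comp (contDiff_snd.prodMk contDiff_fst)
  have hd := contDiff_partial_fderiv hsw
  have hcomp : IsCompact (Metric.closedBall (0 : G) R ×ˢ Metric.closedBall e₀ 1) :=
    (isCompact_closedBall _ _).prod (isCompact_closedBall _ _)
  obtain ⟨C, hC⟩ := hcomp.exists_bound_of_continuousOn hd.continuous.continuousOn
  have hz : ∀ e y, (∀ᶠ e' in 𝓝 e, ∀ y, R < ‖y‖ → f e' y = 0) → R < ‖y‖ →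
      fderiv ℝ (fun e => f e y) e = 0 := by
    intro e y h hy
    have : (fun e => f e y) =ᶠ[𝓝 e] fun _ => 0 := h.mono fun e' h' => h' y hy
    rw [this.fderiv_eq]
    simp
  refine hasFDerivAt_integral_of_dominated_of_fderiv_le
    (s := {e | ∀ᶠ e' in 𝓝 e, ∀ y, R < ‖y‖ → f e' y = 0} ∩ Metric.closedBall e₀ 1)
    (F' := fun e y => fderiv ℝ (fun e => f e y) e)
    (bound := (Metric.closedBall (0 : G) R).indicator fun _ => C) ?_ ?_ ?_ ?_ ?_ ?_ ?_
  · exact inter_mem (eventually_eventually_nhds.2 hR) (Metric.closedBall_mem_nhds _ one_pos)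
  · exact .of_forall fun e => (contDiff_slice_left hf e).continuous.aestronglyMeasurable
  · refine (contDiff_slice_left hf e₀).continuous.integrable_of_hasCompactSupport ?_
    refine HasCompactSupport.intro (isCompact_closedBall (0 : G) R) fun y hy => ?_
    exact hR.self_of_nhds y (by simpa using hy)
  · exact (contDiff_slice_right hd e₀).continuous.aestronglyMeasurable
  · refine .of_forall fun y e he => ?_
    by_cases hy : y ∈ Metric.closedBall (0 : G) R
    · rw [Set.indicator_of_mem hy]
      exact hC (y, e) ⟨hy, he.2⟩
    · rw [Set.indicator_of_notMem hy, hz e y he.1 (by simpa using hy)]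
      simp
  · rw [integrable_indicator_iff measurableSet_closedBall]
    exact integrableOn_const (isCompact_closedBall _ _).measure_lt_top.ne
  · refine .of_forall fun y e he => ?_
    exact ((contDiff_slice_right hf y).differentiable (by simp) e).hasFDerivAt

lemma iteratedFDeriv_param_integral (μ : Measure G) [IsFiniteMeasureOnCompacts μ] (k : ℕ) :
    ∀ (F : Type) [NormedAddCommGroup F] [NormedSpace ℝ F]
    (f : E → G → F) (_ : ContDiff ℝ ∞ (Function.uncurry f))
    (_ : ∀ e₀, ∃ R : ℝ, ∀ᶠ e in 𝓝 e₀, ∀ y, R < ‖y‖ → f e y = 0) (e₀ : E),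
    iteratedFDeriv ℝ k (fun e => ∫ y, f e y ∂μ) e₀ =
      ∫ y, iteratedFDeriv ℝ k (fun e => f e y) e₀ ∂μ := by
  induction k with
  | zero =>
    intro F _ _ f hf hs e₀
    exact ((continuousMultilinearCurryFin0 ℝ E F).symm.toContinuousLinearEquiv.integral_comp_comm
      (μ := μ) (fun y => f e₀ y)).symm
  | succ k ih =>
    intro F _ _ f hf hs e₀
    have hsw : ContDiff ℝ ∞ (Function.uncurry fun y e => f e y) := hf.comp (contDiff_snd.prodMk contDiff_fst)
    have hd : ContDiff ℝ ∞ (Function.uncurry fun e y => fderiv ℝ (fun e => f e y) e) :=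
      (contDiff_partial_fderiv hsw).comp (contDiff_snd.prodMk contDiff_fst)
    have hs' : ∀ e₀, ∃ R : ℝ, ∀ᶠ e in 𝓝 e₀, ∀ y, R < ‖y‖ →
        fderiv ℝ (fun e => f e y) e = 0 := by
      intro e₀
      obtain ⟨R, hR⟩ := hs e₀
      refine ⟨R, (eventually_eventually_nhds.2 hR).mono fun e h y hy => ?_⟩
      have : (fun e => f e y) =ᶠ[𝓝 e] fun _ => 0 := h.mono fun e' h' => h' y hy
      rw [this.fderiv_eq]
      simp
    have e1 : (fun e => fderiv ℝ (fun e => ∫ y, f e y ∂μ) e) =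
        fun e => ∫ y, fderiv ℝ (fun e => f e y) e ∂μ := by
      ext1 e
      exact (hasFDerivAt_param_integral μ hf hs e).fderiv
    rw [iteratedFDeriv_succ_eq_comp_right, Function.comp_apply, e1, ih _ _ hd hs' e₀]
    simp_rw [iteratedFDeriv_succ_eq_comp_right, Function.comp_apply]
    exact ((continuousMultilinearCurryRightEquiv' ℝ k E F).symm.toContinuousLinearEquiv.integral_comp_comm
      (μ := μ) _).symm

end general

section japanese

lemma one_le_jap {d : ℕ} (v : EuclideanSpace ℝ (Fin d)) : 1 ≤ jap v := by
  unfold jap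
  rw [Real.one_le_sqrt]
  nlinarith [sq_nonneg ‖v‖]

lemma jap_pos {d : ℕ} (v : EuclideanSpace ℝ (Fin d)) : 0 < jap v :=
  lt_of_lt_of_le one_pos (one_le_jap v)

lemma jap_sq {d : ℕ} (v : EuclideanSpace ℝ (Fin d)) : jap v ^ 2 = 1 + ‖v‖ ^ 2 := by
  unfold jap
  rw [Real.sq_sqrt (by positivity)]

lemma jap2_sq {d e : ℕ} (u : EuclideanSpace ℝ (Fin d)) (v : EuclideanSpace ℝ (Fin e)) :
    jap2 u v ^ 2 = 1 + ‖u‖ ^ 2 + ‖v‖ ^ 2 := by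
  unfold jap2
  rw [Real.sq_sqrt (by positivity)]

lemma norm_le_jap {d : ℕ} (v : EuclideanSpace ℝ (Fin d)) : ‖v‖ ≤ jap v := by
  refine (pow_le_pow_iff_left₀ (norm_nonneg _) (jap_pos v).le two_ne_zero).1 ?_
  rw [jap_sq]; linarith

lemma jap_rpow {d : ℕ} (v : EuclideanSpace ℝ (Fin d)) (s : ℝ) :
    jap v ^ s = (1 + ‖v‖ ^ 2) ^ (s / 2) := by
  rw [← jap_sq, ← Real.rpow_natCast, ← Real.rpow_mul (jap_pos v).le]
  congr 1
  push_cast; ring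

lemma contDiff_jap_rpow {d : ℕ} (s : ℝ) :
    ContDiff ℝ ∞ (fun v : EuclideanSpace ℝ (Fin d) => jap v ^ s) := by
  simp_rw [jap_rpow]
  refine ContDiff.rpow_const_of_ne (contDiff_const.add (contDiff_norm_sq ℝ)) fun v => ?_
  positivity

lemma continuous_jap {d : ℕ} : Continuous (fun v : EuclideanSpace ℝ (Fin d) => jap v) := by
  unfold jap
  fun_prop

/-- Derivatives of `(1+|v|²)/λ²`. -/
lemma norm_iteratedFDeriv_q {d : ℕ} (v : EuclideanSpace ℝ (Fin d)) (i : ℕ) (hi : 1 ≤ i) :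
    ‖iteratedFDeriv ℝ i (fun w : EuclideanSpace ℝ (Fin d) => 1 + ‖w‖ ^ 2) v‖ ≤
      2 * jap v ^ ((2 : ℝ) - i) := by
  set L : EuclideanSpace ℝ (Fin d) →L[ℝ] EuclideanSpace ℝ (Fin d) →L[ℝ] ℝ :=
    2 • (innerSL ℝ) with hL
  have hLn : ‖L‖ ≤ 2 := by
    refine L.opNorm_le_bound (by norm_num) fun x => ?_
    have : L x = (2 : ℝ) • innerSL ℝ x := by simp [hL, two_smul]
    rw [this, norm_smul, innerSL_apply_norm]
    simp
  have h1 : fderiv ℝ (fun w : EuclideanSpace ℝ (Fin d) => 1 + ‖w‖ ^ 2) = L := by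
    ext1 w
    rw [fderiv_const_add, fderiv_norm_sq_apply]
    simp [hL]
  obtain ⟨k, rfl⟩ : ∃ k, i = k + 1 := ⟨i - 1, by omega⟩
  rw [← norm_iteratedFDeriv_fderiv, h1]
  rcases k with _ | k
  · rw [norm_iteratedFDeriv_zero]
    have e : (2 : ℝ) - ((0 + 1 : ℕ) : ℝ) = 1 := by norm_num
    rw [e, Real.rpow_one]
    exact (L.le_opNorm v).trans (by gcongr; exact norm_le_jap v)
  · rw [← norm_iteratedFDeriv_fderiv]
    have h2 : fderiv ℝ (L : EuclideanSpace ℝ (Fin d) → _) = fun _ => L := by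
      ext1 w; exact L.fderiv
    rw [h2]
    rcases k with _ | k
    · rw [norm_iteratedFDeriv_zero]
      have e : (2 : ℝ) - ((0 + 1 + 1 : ℕ) : ℝ) = 0 := by norm_num
      rw [e, Real.rpow_zero]
      linarith
    · rw [iteratedFDeriv_succ_const]
      have := jap_pos v
      simp only [Pi.zero_apply, norm_zero]
      positivity

lemma jap_symbol (d : ℕ) (s : ℝ) (k : ℕ) : ∃ C : ℝ, 0 ≤ C ∧ ∀ v : EuclideanSpace ℝ (Fin d),
    ‖iteratedFDeriv ℝ k (fun v => jap v ^ s) v‖ ≤ C * jap v ^ (s - k) := by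
  set g : ℝ → ℝ := fun t => t ^ (s / 2) with hg
  set C : ℝ := ∑ i ∈ Finset.range (k + 1), ‖iteratedFDerivWithin ℝ i g (Set.Ioi 0) 1‖ with hC
  have hC0 : 0 ≤ C := Finset.sum_nonneg fun _ _ => norm_nonneg _
  refine ⟨k.factorial * C * 2 ^ k, by positivity, fun v => ?_⟩
  have hl := jap_pos v
  set l := jap v with hlv
  set f : EuclideanSpace ℝ (Fin d) → ℝ := fun w => (l ^ 2)⁻¹ • (1 + ‖w‖ ^ 2) with hf
  have hq : ContDiff ℝ ∞ (fun w : EuclideanSpace ℝ (Fin d) => 1 + ‖w‖ ^ 2) :=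
    contDiff_const.add (contDiff_norm_sq ℝ)
  have hfs : ContDiff ℝ ∞ f := hq.const_smul _
  have hgs : ContDiffOn ℝ ∞ g (Set.Ioi 0) := fun t ht =>
    (Real.contDiffAt_rpow_const_of_ne (ne_of_gt ht)).contDiffWithinAt
  have hfv : f v = 1 := by
    simp only [hf, smul_eq_mul]
    rw [← jap_sq, ← hlv]
    field_simp
  have hcomp : (fun v : EuclideanSpace ℝ (Fin d) => jap v ^ s) = (l ^ s) • (g ∘ f) := by
    ext1 w
    simp only [hg, hf, Pi.smul_apply, Function.comp_apply, smul_eq_mul]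
    rw [Real.mul_rpow (by positivity) (by positivity), jap_rpow,
      Real.inv_rpow (by positivity), ← Real.rpow_natCast l 2, ← Real.rpow_mul hl.le]
    have : ((2 : ℕ) : ℝ) * (s / 2) = s := by push_cast; ring
    rw [this]
    have : l ^ s ≠ 0 := (Real.rpow_pos_of_pos hl s).ne'
    field_simp
  have hmaps : Set.range f ⊆ Set.Ioi 0 := by
    rintro _ ⟨w, rfl⟩
    simp only [hf, smul_eq_mul, Set.mem_Ioi]
    positivity
  have key := norm_iteratedFDeriv_comp_le' (n := k) hmaps isOpen_Ioi.uniqueDiffOn hgs hfs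
    (by exact_mod_cast le_top) v (C := C) (D := 2 / l) (fun i hi => by
      rw [hfv, hC]
      exact Finset.single_le_sum (f := fun i => ‖iteratedFDerivWithin ℝ i g (Set.Ioi 0) 1‖)
        (fun _ _ => norm_nonneg _) (Finset.mem_range.2 (by omega))) (fun i hi1 hik => by
      rw [hf, iteratedFDeriv_const_smul_apply' (hq.contDiffAt.of_le (by exact_mod_cast le_top)),
        norm_smul, Real.norm_of_nonneg (by positivity)]
      have := norm_iteratedFDeriv_q v i hi1
      rw [Real.rpow_sub hl, Real.rpow_natCast, Real.rpow_two] at this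
      calc _ ≤ (l ^ 2)⁻¹ * (2 * (l ^ 2 / l ^ i)) := by gcongr
        _ = 2 / l ^ i := by field_simp
        _ ≤ 2 ^ i / l ^ i := by
          gcongr
          exact le_self_pow₀ (by norm_num) (by omega)
        _ = _ := by rw [div_pow])
  rw [hcomp, iteratedFDeriv_const_smul_apply, norm_smul,
    Real.norm_of_nonneg (by positivity)]
  · calc _ ≤ l ^ s * (k.factorial * C * (2 / l) ^ k) := by gcongr
      _ = _ := by
        rw [Real.rpow_sub hl, Real.rpow_natCast, div_pow]
        ring
  · refine ContDiff.contDiffAt ?_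
    have : ContDiff ℝ ∞ (g ∘ f) := hgs.comp_contDiff hfs fun w => hmaps ⟨w, rfl⟩
    exact this.of_le (by exact_mod_cast le_top)

end japanese

section bounds

set_option maxSynthPendingDepth 3

lemma cutoff_symbol {d e : ℕ} {ψ : EuclideanSpace ℝ (Fin e) → ℝ} (hψ : ContDiff ℝ ∞ ψ)
    (hs : HasCompactSupport ψ) {R : ℝ} (hR : 0 ≤ R) (k : ℕ) :
    ∃ A : ℝ, 0 ≤ A ∧ ∀ (ξ : EuclideanSpace ℝ (Fin d)) (y : EuclideanSpace ℝ (Fin e)),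
      ‖y‖ ≤ R * jap ξ ^ (1 / 2 : ℝ) →
      ‖iteratedFDeriv ℝ k (fun ξ : EuclideanSpace ℝ (Fin d) =>
        ψ ((jap ξ ^ (-(1 / 2) : ℝ)) • y)) ξ‖ ≤ A * ((jap ξ)⁻¹) ^ k := by
  choose C hC0 hC using jap_symbol d (-(1 / 2))
  have hb : ∀ i : ℕ, ∃ c, ∀ y, ‖iteratedFDeriv ℝ i ψ y‖ ≤ c := fun i =>
    (hs.iteratedFDeriv i).exists_bound_of_continuous
      (hψ.continuous_iteratedFDeriv (by exact_mod_cast le_top))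
  choose c hc using hb
  have hc0 : ∀ i, 0 ≤ c i := fun i => (norm_nonneg _).trans (hc i 0)
  set D : ℝ := 1 + ∑ i ∈ Finset.range (k + 1), R * C i with hD
  have hD1 : 1 ≤ D := by
    have : 0 ≤ ∑ i ∈ Finset.range (k + 1), R * C i :=
      Finset.sum_nonneg fun i _ => mul_nonneg hR (hC0 i)
    linarith
  set S : ℝ := ∑ i ∈ Finset.range (k + 1), c i with hS
  have hS0 : 0 ≤ S := Finset.sum_nonneg fun i _ => hc0 i
  refine ⟨k.factorial * S * D ^ k, by positivity, fun ξ y hy => ?_⟩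
  have hl := jap_pos ξ
  have hj := contDiff_jap_rpow (d := d) (-(1 / 2))
  have key := norm_iteratedFDeriv_comp_le (n := k) (x := ξ) (g := ψ)
    (f := fun ξ : EuclideanSpace ℝ (Fin d) => (jap ξ ^ (-(1 / 2) : ℝ)) • y)
    hψ (hj.smul contDiff_const) (by exact_mod_cast le_top) (C := S) (D := D * (jap ξ)⁻¹)
    (fun i hi => (hc i _).trans
      (Finset.single_le_sum (f := c) (fun i _ => hc0 i) (Finset.mem_range.2 (by omega))))
    (fun i hi1 hik => by
      have h1 := (ContinuousLinearMap.toSpanSingleton ℝ y).norm_iteratedFDeriv_comp_left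
        (n := i) (hj.contDiffAt (x := ξ)) (by exact_mod_cast le_top)
      have h2 : (ContinuousLinearMap.toSpanSingleton ℝ y) ∘
          (fun v : EuclideanSpace ℝ (Fin d) => jap v ^ (-(1 / 2) : ℝ)) =
          fun ξ => (jap ξ ^ (-(1 / 2) : ℝ)) • y := by
        ext1 v; simp
      rw [h2, ContinuousLinearMap.norm_toSpanSingleton] at h1
      have h3 := hC i ξ
      have h4 : R * C i ≤ D := by
        have := Finset.single_le_sum (f := fun i => R * C i)
          (fun i _ => mul_nonneg hR (hC0 i)) (Finset.mem_range.2 (show i < k + 1 by omega))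
        linarith
      have h5 : jap ξ ^ (1 / 2 : ℝ) * jap ξ ^ (-(1 / 2) - (i : ℝ)) = ((jap ξ)⁻¹) ^ i := by
        rw [← Real.rpow_add hl, inv_pow, ← Real.rpow_natCast, ← Real.rpow_neg hl.le]
        congr 1; ring
      calc _ ≤ ‖y‖ * _ := h1
        _ ≤ (R * jap ξ ^ (1 / 2 : ℝ)) * (C i * jap ξ ^ (-(1 / 2) - (i : ℝ))) := by
          gcongr
        _ = (R * C i) * ((jap ξ)⁻¹) ^ i := by rw [← h5]; ring
        _ ≤ D ^ i * ((jap ξ)⁻¹) ^ i := by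
          gcongr
          exact h4.trans (le_self_pow₀ hD1 (by omega))
        _ = _ := by rw [mul_pow])
  refine key.trans (le_of_eq ?_)
  rw [mul_pow]; ring

open scoped Pointwise in
lemma integral_jap_bound {d : ℕ} (hd : 1 ≤ d) {M : ℝ} (hM : M > -(d : ℝ)) {R : ℝ} (hR : 0 ≤ R) :
    ∃ C : ℝ, 0 ≤ C ∧ ∀ L : ℝ, 1 ≤ L →
      ∫ y in Metric.closedBall (0 : EuclideanSpace ℝ (Fin d)) (R * L), jap y ^ M ≤
        C * L ^ (M + d) := by
  set h : EuclideanSpace ℝ (Fin d) → ℝ := fun y => jap y ^ M + ‖y‖ ^ M with hh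
  have hfin : Module.finrank ℝ (EuclideanSpace ℝ (Fin d)) = d := by simp
  have hnt : Nontrivial (EuclideanSpace ℝ (Fin d)) :=
    Module.nontrivial_of_finrank_pos (R := ℝ) (by omega)
  have hjc : ∀ M : ℝ, Continuous (fun y : EuclideanSpace ℝ (Fin d) => jap y ^ M) := fun M =>
    (contDiff_jap_rpow M).continuous
  have hint1 : LocallyIntegrable (fun y : EuclideanSpace ℝ (Fin d) => ‖y‖ ^ M) :=
    locallyIntegrable_of_norm_le_rpow (C := 1) (α := -M) (by omega) (by rw [hfin]; linarith)
      (.of_forall fun y => by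
        rw [Real.norm_of_nonneg (by positivity)]; simp)
      (by
        apply Measurable.aestronglyMeasurable
        fun_prop)
  have hint : IntegrableOn h (Metric.closedBall 0 R) :=
    ((hjc M).locallyIntegrable.add hint1).integrableOn_isCompact (isCompact_closedBall _ _)
  have hh0 : ∀ y, 0 ≤ h y := fun y => by
    have := jap_pos y
    simp only [hh]; positivity
  refine ⟨∫ y in Metric.closedBall 0 R, h y, integral_nonneg hh0, fun L hL => ?_⟩
  have hL0 : 0 < L := by linarith
  have hball : Metric.closedBall (0 : EuclideanSpace ℝ (Fin d)) (R * L) =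
      L • Metric.closedBall (0 : EuclideanSpace ℝ (Fin d)) R := by
    rw [smul_closedBall' hL0.ne']
    simp [abs_of_pos hL0, mul_comm]
  have hsc := Measure.setIntegral_comp_smul_of_pos (volume : Measure (EuclideanSpace ℝ (Fin d)))
    (fun y => jap y ^ M) (Metric.closedBall 0 R) hL0
  rw [← hball, hfin, smul_eq_mul] at hsc
  have hle : ∫ y in Metric.closedBall (0 : EuclideanSpace ℝ (Fin d)) R, jap (L • y) ^ M ≤
      ∫ y in Metric.closedBall 0 R, L ^ M * h y := by
    refine integral_mono_ae ?_ (hint.const_mul _) ?_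
    · exact ((hjc M).comp (continuous_const_smul L)).continuousOn.integrableOn_compact
        (isCompact_closedBall _ _)
    · refine ae_restrict_of_ae ?_
      filter_upwards [compl_mem_ae_iff.2 (measure_singleton (0 : EuclideanSpace ℝ (Fin d)))]
        with y hy
      have hy0 : 0 < ‖y‖ := norm_pos_iff.2 hy
      have hj := jap_pos y
      simp only [hh]
      rcases le_total 0 M with hM0 | hM0
      · have : jap (L • y) ≤ L * jap y := by
          refine (pow_le_pow_iff_left₀ (jap_pos _).le (by positivity) two_ne_zero).1 ?_
          rw [mul_pow, jap_sq, jap_sq, norm_smul, Real.norm_of_nonneg hL0.le]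
          nlinarith
        calc jap (L • y) ^ M ≤ (L * jap y) ^ M :=
              Real.rpow_le_rpow (jap_pos _).le this hM0
          _ = L ^ M * jap y ^ M := Real.mul_rpow hL0.le hj.le
          _ ≤ _ := by
            gcongr
            have : 0 ≤ ‖y‖ ^ M := by positivity
            linarith
      · have : L * ‖y‖ ≤ jap (L • y) := by
          have := norm_le_jap (L • y)
          rwa [norm_smul, Real.norm_of_nonneg hL0.le] at this
        calc jap (L • y) ^ M ≤ (L * ‖y‖) ^ M :=
              Real.rpow_le_rpow_of_nonpos (by positivity) this hM0
          _ = L ^ M * ‖y‖ ^ M := Real.mul_rpow hL0.le hy0.le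
          _ ≤ _ := by
            gcongr
            have : 0 ≤ jap y ^ M := by positivity
            linarith
  rw [integral_const_mul, hsc] at hle
  rw [Real.rpow_add hL0, Real.rpow_natCast]
  have hLd : 0 < L ^ d := by positivity
  rw [inv_mul_le_iff₀ hLd] at hle
  linarith

end bounds

section main

set_option maxSynthPendingDepth 3

lemma jap2_rpow_le {d e : ℕ} {R : ℝ} (hR : 0 ≤ R) (s : ℝ) (ξ : EuclideanSpace ℝ (Fin d))
    (y : EuclideanSpace ℝ (Fin e)) (hy : ‖y‖ ≤ R * jap ξ ^ (1 / 2 : ℝ)) :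
    jap2 ξ y ^ s ≤ (1 + (1 + R) ^ s) * jap ξ ^ s := by
  have hl := jap_pos ξ
  have h1 : jap ξ ≤ jap2 ξ y := by
    unfold jap jap2
    apply Real.sqrt_le_sqrt
    nlinarith [sq_nonneg ‖y‖]
  have h0 : jap ξ ^ (1 / 2 : ℝ) ≤ jap ξ := by
    conv_rhs => rw [← Real.rpow_one (jap ξ)]
    exact Real.rpow_le_rpow_of_exponent_le (one_le_jap ξ) (by norm_num)
  have hy' : ‖y‖ ≤ R * jap ξ := hy.trans (by gcongr)
  have h2 : jap2 ξ y ≤ (1 + R) * jap ξ := by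
    refine (pow_le_pow_iff_left₀ (hl.le.trans h1) (by positivity) two_ne_zero).1 ?_
    rw [jap2_sq, ← jap_sq]
    have : ‖y‖ ^ 2 ≤ (R * jap ξ) ^ 2 := by gcongr
    nlinarith [mul_nonneg hR (sq_nonneg (jap ξ))]
  have hp : 0 < jap ξ ^ s := Real.rpow_pos_of_pos hl s
  have hp' : 0 < (1 + R) ^ s := Real.rpow_pos_of_pos (by linarith) s
  rcases le_total 0 s with hs | hs
  · calc jap2 ξ y ^ s ≤ ((1 + R) * jap ξ) ^ s := Real.rpow_le_rpow (hl.le.trans h1) h2 hs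
      _ = (1 + R) ^ s * jap ξ ^ s := Real.mul_rpow (by linarith) hl.le
      _ ≤ _ := by gcongr; linarith
  · calc jap2 ξ y ^ s ≤ jap ξ ^ s := Real.rpow_le_rpow_of_nonpos hl h1 hs
      _ = 1 * jap ξ ^ s := by ring
      _ ≤ _ := by gcongr; linarith

lemma pointwise_bound {n d₁ d₂ : ℕ} {M₁ M₂ : ℝ}
    (a : EuclideanSpace ℝ (Fin n) → EuclideanSpace ℝ (Fin d₁) →
      EuclideanSpace ℝ (Fin d₂) → ℂ)
    (ha_smooth : ContDiff ℝ ∞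
      (fun p : EuclideanSpace ℝ (Fin n) × EuclideanSpace ℝ (Fin d₁) ×
          EuclideanSpace ℝ (Fin d₂) => a p.1 p.2.1 p.2.2))
    (ha : ∀ γ α β : ℕ, ∃ C : ℝ, ∀ x ξ' ξ'',
      ‖iteratedFDeriv ℝ γ (fun x => iteratedFDeriv ℝ α (fun ξ' =>
          iteratedFDeriv ℝ β (fun ξ'' => a x ξ' ξ'') ξ'') ξ') x‖ ≤
        C * jap2 ξ' ξ'' ^ (M₁ - (α : ℝ)) * jap ξ'' ^ (M₂ - (β : ℝ)))
    (ψ : EuclideanSpace ℝ (Fin d₂) → ℝ)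
    (hψ : ContDiff ℝ ∞ ψ) (hs : HasCompactSupport ψ) {R : ℝ} (hR : 0 ≤ R) (γ α : ℕ) :
    ∃ C : ℝ, 0 ≤ C ∧ ∀ x ξ' ξ'', ‖ξ''‖ ≤ R * jap ξ' ^ (1 / 2 : ℝ) →
      ‖iteratedFDeriv ℝ γ (fun x => iteratedFDeriv ℝ α (fun ξ' =>
            a x ξ' ξ'' * (ψ ((jap ξ' ^ (-(1 / 2) : ℝ)) • ξ'') : ℂ)) ξ') x‖ ≤
        C * jap ξ' ^ (M₁ - (α : ℝ)) * jap ξ'' ^ M₂ := by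
  choose Ca hCa using fun j => ha γ j 0
  choose A hA0 hA using cutoff_symbol (d := d₁) hψ hs hR
  set J : (EuclideanSpace ℝ (Fin d₂) [×0]→L[ℝ] ℂ) →L[ℝ] ℂ :=
    ((continuousMultilinearCurryFin0 ℝ (EuclideanSpace ℝ (Fin d₂)) ℂ).toContinuousLinearEquiv :
      (EuclideanSpace ℝ (Fin d₂) [×0]→L[ℝ] ℂ) →L[ℝ] ℂ) with hJ
  set B : ℝ →L[ℝ] (EuclideanSpace ℝ (Fin d₂) [×0]→L[ℝ] ℂ) →L[ℝ] ℂ :=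
    ContinuousLinearMap.toSpanSingleton ℝ J with hB
  set AA : ℝ := ∑ i ∈ Finset.range (α + 1), A i with hAA
  have hAA0 : 0 ≤ AA := Finset.sum_nonneg fun i _ => hA0 i
  set KK : ℝ := ∑ j ∈ Finset.range (α + 1), |Ca j| * (1 + (1 + R) ^ (M₁ - (j : ℝ))) with hKK
  have hterm : ∀ j : ℕ, 0 ≤ |Ca j| * (1 + (1 + R) ^ (M₁ - (j : ℝ))) := fun j => by positivity
  have hKK0 : 0 ≤ KK := Finset.sum_nonneg fun j _ => hterm j
  refine ⟨‖B‖ * 2 ^ α * AA * KK, by positivity, fun x ξ y hy => ?_⟩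
  have hl := jap_pos ξ
  have hly := jap_pos y
  have hpow : ∀ j : ℕ, jap ξ ^ (M₁ - (j : ℝ)) = jap ξ ^ M₁ * ((jap ξ)⁻¹) ^ j := fun j => by
    rw [Real.rpow_sub hl, Real.rpow_natCast, inv_pow]; rfl
  have hu : ContDiff ℝ ∞ (fun ξ : EuclideanSpace ℝ (Fin d₁) =>
      ψ ((jap ξ ^ (-(1 / 2) : ℝ)) • y)) :=
    hψ.comp ((contDiff_jap_rpow _).smul contDiff_const)
  have ha0 : ContDiff ℝ ∞ (Function.uncurry
      fun (x : EuclideanSpace ℝ (Fin n)) (ξ : EuclideanSpace ℝ (Fin d₁)) =>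
        iteratedFDeriv ℝ 0 (fun y => a x ξ y) y) := by
    have h1 : ContDiff ℝ ∞ (fun p : EuclideanSpace ℝ (Fin n) × EuclideanSpace ℝ (Fin d₁) =>
        a p.1 p.2 y) :=
      ha_smooth.comp (contDiff_fst.prodMk (contDiff_snd.prodMk contDiff_const))
    exact (continuousMultilinearCurryFin0 ℝ (EuclideanSpace ℝ (Fin d₂)) ℂ).symm.contDiff.comp h1
  have key := mixed_leibniz γ (t := (jap ξ)⁻¹) (by positivity) x ξ α _ _ _ B
    (fun ξ : EuclideanSpace ℝ (Fin d₁) => ψ ((jap ξ ^ (-(1 / 2) : ℝ)) • y))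
    (fun x ξ => iteratedFDeriv ℝ 0 (fun y => a x ξ y) y) hu ha0 AA
    (KK * jap ξ ^ M₁ * jap y ^ M₂) hAA0 (by positivity)
    (fun i hi => (hA i ξ y hy).trans (by
      gcongr
      exact Finset.single_le_sum (f := A) (fun i _ => hA0 i) (Finset.mem_range.2 (by omega))))
    (fun j hj => by
      refine (hCa j x ξ y).trans ?_
      have h1 := jap2_rpow_le hR (M₁ - (j : ℝ)) ξ y hy
      have h2 : 0 ≤ jap2 ξ y ^ (M₁ - (j : ℝ)) := Real.rpow_nonneg (Real.sqrt_nonneg _) _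
      have h3 : |Ca j| * (1 + (1 + R) ^ (M₁ - (j : ℝ))) ≤ KK :=
        Finset.single_le_sum (f := fun j : ℕ => |Ca j| * (1 + (1 + R) ^ (M₁ - (j : ℝ))))
          (fun j _ => hterm j) (Finset.mem_range.2 (by omega))
      have h4 : M₂ - ((0 : ℕ) : ℝ) = M₂ := by simp
      rw [h4]
      calc Ca j * jap2 ξ y ^ (M₁ - (j : ℝ)) * jap y ^ M₂
          ≤ |Ca j| * ((1 + (1 + R) ^ (M₁ - (j : ℝ))) * jap ξ ^ (M₁ - (j : ℝ))) * jap y ^ M₂ := by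
            gcongr
            exact le_abs_self _
        _ = (|Ca j| * (1 + (1 + R) ^ (M₁ - (j : ℝ)))) *
            (jap ξ ^ M₁ * ((jap ξ)⁻¹) ^ j * jap y ^ M₂) := by rw [hpow]; ring
        _ ≤ KK * (jap ξ ^ M₁ * ((jap ξ)⁻¹) ^ j * jap y ^ M₂) := by gcongr
        _ = _ := by ring)
  have e : ∀ (x : EuclideanSpace ℝ (Fin n)) (ξ : EuclideanSpace ℝ (Fin d₁)),
      B (ψ ((jap ξ ^ (-(1 / 2) : ℝ)) • y)) (iteratedFDeriv ℝ 0 (fun y => a x ξ y) y) =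
      a x ξ y * (ψ ((jap ξ ^ (-(1 / 2) : ℝ)) • y) : ℂ) := by
    intro x ξ
    simp [hB, hJ, mul_comm]
  simp_rw [e] at key
  refine key.trans (le_of_eq ?_)
  rw [hpow]; ring

end main

/-- Parabolic decomposition (case `M₂ > −d₂`): integrating a symbol-valued symbol of
order `(M₁,M₂)` over `ξ″` against a cutoff supported where `|ξ″| ≲ ⟨ξ′⟩^{1/2}`
produces a type-`(1/2,1/2)` symbol of order `M₁ + (M₂+d₂)/2` in `ξ′`. -/
theorem stmt14 (n d₁ d₂ : ℕ) (hn : 1 ≤ n) (hd₁ : 1 ≤ d₁) (hd₂ : 1 ≤ d₂)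
    (M₁ M₂ : ℝ) (hM₂ : M₂ > -(d₂ : ℝ))
    (a : EuclideanSpace ℝ (Fin n) → EuclideanSpace ℝ (Fin d₁) →
      EuclideanSpace ℝ (Fin d₂) → ℂ)
    (ha_smooth : ContDiff ℝ (⊤ : ℕ∞)
      (fun p : EuclideanSpace ℝ (Fin n) × EuclideanSpace ℝ (Fin d₁) ×
          EuclideanSpace ℝ (Fin d₂) => a p.1 p.2.1 p.2.2))
    (ha : ∀ γ α β : ℕ, ∃ C : ℝ, ∀ x ξ' ξ'',
      ‖iteratedFDeriv ℝ γ (fun x => iteratedFDeriv ℝ α (fun ξ' =>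
          iteratedFDeriv ℝ β (fun ξ'' => a x ξ' ξ'') ξ'') ξ') x‖ ≤
        C * jap2 ξ' ξ'' ^ (M₁ - (α : ℝ)) * jap ξ'' ^ (M₂ - (β : ℝ)))
    (ψ : EuclideanSpace ℝ (Fin d₂) → ℝ)
    (hψ_smooth : ContDiff ℝ (⊤ : ℕ∞) ψ) (hψ_supp : HasCompactSupport ψ) :
    ∀ γ α : ℕ, ∃ C' : ℝ, ∀ x ξ',
      ‖iteratedFDeriv ℝ γ (fun x => iteratedFDeriv ℝ α (fun ξ' =>
          ∫ ξ'' : EuclideanSpace ℝ (Fin d₂),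
            a x ξ' ξ'' * (ψ ((jap ξ' ^ (-(1 / 2) : ℝ)) • ξ'') : ℂ)) ξ') x‖ ≤
        C' * jap ξ' ^ (M₁ + (M₂ + d₂) / 2 - (α : ℝ) / 2) := by
  classical
  intro γ α
  -- radius of the support of the cutoff
  obtain ⟨R, hR0, hR⟩ : ∃ R : ℝ, 0 ≤ R ∧ ∀ y, R < ‖y‖ → ψ y = 0 := by
    obtain ⟨R, hR⟩ := hψ_supp.isBounded.exists_norm_le
    refine ⟨max R 0, le_max_right _ _, fun y hy => ?_⟩
    by_contra h
    have := hR y (subset_tsupport ψ h)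
    exact absurd (lt_of_le_of_lt (le_max_left R 0) hy) (not_lt.2 this)
  obtain ⟨C₁, hC₁0, hC₁⟩ := pointwise_bound a ha_smooth ha ψ hψ_smooth hψ_supp hR0 γ α
  obtain ⟨C₂, hC₂0, hC₂⟩ := integral_jap_bound hd₂ hM₂ hR0
  set F : EuclideanSpace ℝ (Fin n) → EuclideanSpace ℝ (Fin d₁) →
      EuclideanSpace ℝ (Fin d₂) → ℂ := fun x ξ y =>
    a x ξ y * (ψ ((jap ξ ^ (-(1 / 2) : ℝ)) • y) : ℂ) with hF
  have hFs : ContDiff ℝ ∞ (fun p : EuclideanSpace ℝ (Fin n) × EuclideanSpace ℝ (Fin d₁) ×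
          EuclideanSpace ℝ (Fin d₂) => F p.1 p.2.1 p.2.2) := by
    refine ha_smooth.mul (Complex.ofRealCLM.contDiff.comp (hψ_smooth.comp ?_))
    exact ((contDiff_jap_rpow _).comp (contDiff_fst.comp contDiff_snd)).smul
      (contDiff_snd.comp contDiff_snd)
  have hzero : ∀ x ξ y, R * jap ξ ^ (1 / 2 : ℝ) < ‖y‖ → F x ξ y = 0 := by
    intro x ξ y hy
    have hl := jap_pos ξ
    simp only [hF]
    rw [hR, Complex.ofReal_zero, mul_zero]
    rw [norm_smul, Real.norm_of_nonneg (by positivity), Real.rpow_neg hl.le,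
      inv_mul_eq_div, lt_div_iff₀ (by positivity)]
    exact hy
  have hrc : Continuous (fun ξ : EuclideanSpace ℝ (Fin d₁) => R * jap ξ ^ (1 / 2 : ℝ)) :=
    continuous_const.mul (contDiff_jap_rpow _).continuous
  -- differentiate under the integral in the frequency variable
  have step1 : ∀ x ξ, iteratedFDeriv ℝ α (fun ξ => ∫ y, F x ξ y) ξ =
      ∫ y, iteratedFDeriv ℝ α (fun ξ => F x ξ y) ξ := by
    intro x ξ
    refine iteratedFDeriv_param_integral volume α ℂ (F x) ?_ ?_ ξ
    · exact hFs.comp (contDiff_const.prodMk contDiff_id)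
    · intro ξ₀
      refine ⟨R * jap ξ₀ ^ (1 / 2 : ℝ) + 1, ?_⟩
      filter_upwards [hrc.continuousAt.eventually_lt_const
        (show R * jap ξ₀ ^ (1 / 2 : ℝ) < R * jap ξ₀ ^ (1 / 2 : ℝ) + 1 by linarith)] with ξ hξ y hy
      exact hzero x ξ y (hξ.trans hy)
  have hDzero : ∀ x ξ y, R * jap ξ ^ (1 / 2 : ℝ) < ‖y‖ →
      iteratedFDeriv ℝ α (fun ξ => F x ξ y) ξ = 0 := by
    intro x ξ y hy
    have h1 : (fun ξ => F x ξ y) =ᶠ[𝓝 ξ] fun _ => 0 := by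
      filter_upwards [hrc.continuousAt.eventually_lt_const hy] with ξ' hξ'
      exact hzero x ξ' y hξ'
    rw [(h1.iteratedFDeriv ℝ α).self_of_nhds]
    simp
  -- differentiate under the integral in the base variable
  have step2 : ∀ x ξ, iteratedFDeriv ℝ γ
      (fun x => ∫ y, iteratedFDeriv ℝ α (fun ξ => F x ξ y) ξ) x =
      ∫ y, iteratedFDeriv ℝ γ (fun x => iteratedFDeriv ℝ α (fun ξ => F x ξ y) ξ) x := by
    intro x ξ
    refine iteratedFDeriv_param_integral volume γ _
      (fun x y => iteratedFDeriv ℝ α (fun ξ => F x ξ y) ξ) ?_ ?_ x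
    · have h1 : ContDiff ℝ ∞ (Function.uncurry
          fun (q : EuclideanSpace ℝ (Fin n) × EuclideanSpace ℝ (Fin d₂))
            (ξ : EuclideanSpace ℝ (Fin d₁)) => F q.1 ξ q.2) :=
        hFs.comp ((contDiff_fst.comp contDiff_fst).prodMk
          (contDiff_snd.prodMk (contDiff_snd.comp contDiff_fst)))
      exact contDiff_slice_right (contDiff_partial_iteratedFDeriv h1 α) ξ
    · intro x₀
      exact ⟨R * jap ξ ^ (1 / 2 : ℝ), Filter.Eventually.of_forall fun x y hy => hDzero x ξ y hy⟩
  refine ⟨C₁ * C₂, fun x ξ => ?_⟩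
  have hl := jap_pos ξ
  have hl1 := one_le_jap ξ
  have hrew : (fun x => iteratedFDeriv ℝ α (fun ξ => ∫ y, F x ξ y) ξ) =
      fun x => ∫ y, iteratedFDeriv ℝ α (fun ξ => F x ξ y) ξ := funext fun x => step1 x ξ
  change ‖iteratedFDeriv ℝ γ (fun x => iteratedFDeriv ℝ α (fun ξ => ∫ y, F x ξ y) ξ) x‖ ≤ _
  rw [hrew, step2]
  set L : ℝ := jap ξ ^ (1 / 2 : ℝ) with hL
  have hL1 : 1 ≤ L := Real.one_le_rpow hl1 (by norm_num)
  set K : ℝ := C₁ * jap ξ ^ (M₁ - (α : ℝ)) with hK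
  have hK0 : 0 ≤ K := by positivity
  have hint : IntegrableOn (fun y : EuclideanSpace ℝ (Fin d₂) => K * jap y ^ M₂)
      (Metric.closedBall 0 (R * L)) :=
    (continuous_const.mul (contDiff_jap_rpow M₂).continuous).continuousOn.integrableOn_compact
      (isCompact_closedBall _ _)
  have hb := norm_integral_le_of_norm_le (μ := volume)
    (f := fun y => iteratedFDeriv ℝ γ (fun x => iteratedFDeriv ℝ α (fun ξ => F x ξ y) ξ) x)
    (hint.integrable_indicator measurableSet_closedBall) (Filter.Eventually.of_forall fun y => by
      by_cases hy : y ∈ Metric.closedBall (0 : EuclideanSpace ℝ (Fin d₂)) (R * L)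
      · rw [Set.indicator_of_mem hy]
        exact hC₁ x ξ y (mem_closedBall_zero_iff.1 hy)
      · rw [Set.indicator_of_notMem hy]
        have hy' : R * jap ξ ^ (1 / 2 : ℝ) < ‖y‖ :=
          not_le.1 fun h => hy (mem_closedBall_zero_iff.2 h)
        have : (fun x => iteratedFDeriv ℝ α (fun ξ => F x ξ y) ξ) = fun _ => 0 := by
          ext1 x; exact hDzero x ξ y hy'
        rw [this]
        simp)
  refine hb.trans ?_
  rw [integral_indicator measurableSet_closedBall, integral_const_mul]
  have hLp : L ^ (M₂ + d₂) = jap ξ ^ ((M₂ + d₂) / 2) := by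
    rw [hL, ← Real.rpow_mul hl.le]
    congr 1; ring
  calc K * ∫ y in Metric.closedBall (0 : EuclideanSpace ℝ (Fin d₂)) (R * L), jap y ^ M₂
      ≤ K * (C₂ * L ^ (M₂ + d₂)) := by
        gcongr
        exact hC₂ L hL1
    _ = C₁ * C₂ * jap ξ ^ (M₁ - (α : ℝ) + (M₂ + d₂) / 2) := by
        rw [hLp, Real.rpow_add hl, hK]; ring
    _ ≤ _ := by
        have : (0 : ℝ) ≤ α := Nat.cast_nonneg _
        refine mul_le_mul_of_nonneg_left (Real.rpow_le_rpow_of_exponent_le hl1 ?_)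
          (mul_nonneg hC₁0 hC₂0)
        linarith
end

section
/- Let d₁, d₂, d₃ ≥ 1, N = d₁+d₂+d₃, and let T : ℝ^N → ℝ^N be an invertible linear map with T(ℝ^{d₁} × {0} × {0}) = ℝ^{d₁} × {0} × {0} and T(ℝ^{d₁} × ℝ^{d₂} × {0}) = ℝ^{d₁} × ℝ^{d₂} × {0}. Let n ≥ 1 and M₁, M₂, M₃ ∈ ℝ, and suppose a : ℝⁿ × ℝ^N → ℂ is smooth and satisfies, for all multi-indices α, β, η, γ, |∂_x^γ ∂_{ξ′}^α ∂_{ξ″}^β ∂_{ξ‴}^η a(x, ξ′, ξ″, ξ‴)| ≤ C ⟨(ξ′,ξ″,ξ‴)⟩^{M₁−|α|} ⟨(ξ″,ξ‴)⟩^{M₂−|β|} ⟨ξ‴⟩^{M₃−|η|} for all arguments, where ξ = (ξ′,ξ″,ξ‴) ∈ ℝ^{d₁} × ℝ^{d₂} × ℝ^{d₃} and ⟨·⟩ := (1+|·|²)^{1/2}. Then the function (x,ξ) ↦ a(x, Tξ) satisfies estimates of the same form, with the same orders M₁, M₂, M₃ and new constants. -/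
set_option synthInstance.maxHeartbeats 1000000
set_option maxHeartbeats 1000000

open scoped ContDiff

namespace TripleSymbol

section general

variable {E F G V : Type*} [NormedAddCommGroup E] [NormedSpace ℝ E]
  [NormedAddCommGroup F] [NormedSpace ℝ F] [NormedAddCommGroup G] [NormedSpace ℝ G]
  [NormedAddCommGroup V] [NormedSpace ℝ V]

/-- Iterated directional derivatives along a list of vectors (head outermost). -/
noncomputable def DD : List E → (E → F) → E → F
  | [], h => h
  | v :: l, h => fun p => fderiv ℝ (DD l h) p v

lemma DD_contDiff (l : List E) {h : E → F} (hh : ContDiff ℝ ∞ h) : ContDiff ℝ ∞ (DD l h) := by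
  induction l with
  | nil => exact hh
  | cons v l ih =>
    have := ih.fderiv_right (m := ∞) (by simp)
    exact this.clm_apply contDiff_const

lemma DD_diff (l : List E) {h : E → F} (hh : ContDiff ℝ ∞ h) : Differentiable ℝ (DD l h) :=
  (DD_contDiff l hh).differentiable (by simp)

lemma DD_append (l l' : List E) (h : E → F) : DD (l ++ l') h = DD l (DD l' h) := by
  induction l with
  | nil => rfl
  | cons v l ih => simp only [List.cons_append, DD, ih]

lemma DD_clm (Λ : F →L[ℝ] G) (l : List E) {h : E → F} (hh : ContDiff ℝ ∞ h) :
    DD l (fun p => Λ (h p)) = fun p => Λ (DD l h p) := by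
  induction l with
  | nil => rfl
  | cons v l ih =>
    funext p
    simp only [DD, ih]
    have := (Λ.hasFDerivAt.comp p (DD_diff l hh p).hasFDerivAt).fderiv
    change fderiv ℝ (Λ ∘ DD l h) p v = _
    rw [this]; rfl

lemma DD_comp (S : E →L[ℝ] V) (l : List E) {h : V → F} (hh : ContDiff ℝ ∞ h) :
    DD l (fun p => h (S p)) = fun p => DD (l.map S) h (S p) := by
  induction l with
  | nil => rfl
  | cons v l ih =>
    funext p
    simp only [DD, ih, List.map_cons]
    have := ((DD_diff (l.map S) hh (S p)).hasFDerivAt.comp p S.hasFDerivAt).fderiv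
    change fderiv ℝ (DD (l.map S) h ∘ S) p v = _
    rw [this]; rfl

lemma DD_perm {l l' : List E} (hl : l.Perm l') {h : E → F} (hh : ContDiff ℝ ∞ h) :
    DD l h = DD l' h := by
  induction hl with
  | nil => rfl
  | cons v _ ih => simp only [DD, ih]
  | swap v w l =>
    funext p
    have hs := DD_contDiff l hh
    have hd : Differentiable ℝ (fderiv ℝ (DD l h)) :=
      (hs.fderiv_right (m := ∞) (by simp)).differentiable (by simp)
    have key : ∀ v w : E, fderiv ℝ (fun q => fderiv ℝ (DD l h) q v) p w
        = fderiv ℝ (fderiv ℝ (DD l h)) p w v := by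
      intro v w
      rw [fderiv_clm_apply (hd p) (differentiableAt_const v)]
      simp
    have hsym : IsSymmSndFDerivAt ℝ (DD l h) p :=
      (hs.contDiffAt).isSymmSndFDerivAt (by simp; exact WithTop.coe_le_coe.2 le_top)
    simp only [DD]
    rw [key, key]
    exact hsym.eq _ _
  | trans _ _ ih1 ih2 => exact ih1.trans ih2

lemma DD_sum {ι : Type*} (s : Finset ι) (x : ι → E) (A B : List E) {h : E → F}
    (hh : ContDiff ℝ ∞ h) :
    DD (A ++ (∑ j ∈ s, x j) :: B) h = fun p => ∑ j ∈ s, DD (A ++ x j :: B) h p := by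
  induction A with
  | nil => funext p; simp [DD]
  | cons v A ih =>
    funext p
    simp only [List.cons_append, DD, ih]
    rw [fderiv_fun_sum (fun i _ => DD_diff _ hh p)]
    simp

lemma DD_zero (A B : List E) {h : E → F} (hh : ContDiff ℝ ∞ h) (p : E) :
    DD (A ++ 0 :: B) h p = 0 := by
  have := congrFun (DD_sum (∅ : Finset ℕ) (fun _ => (0 : E)) A B hh) p
  simpa using this

lemma iteratedFDeriv_eq_DD (k : ℕ) {h : E → F} (hh : ContDiff ℝ ∞ h) (p : E) (m : Fin k → E) :
    iteratedFDeriv ℝ k h p m = DD (List.ofFn m) h p := by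
  induction k generalizing p with
  | zero => simp [DD]
  | succ k ih =>
    rw [iteratedFDeriv_succ_apply_left, List.ofFn_succ]
    simp only [DD]
    have e : DD (List.ofFn fun i : Fin k => m i.succ) h
        = (ContinuousMultilinearMap.apply ℝ (fun _ : Fin k => E) F (Fin.tail m)) ∘
            (iteratedFDeriv ℝ k h) := by
      funext q
      exact (ih q _).symm
    have hd : DifferentiableAt ℝ (iteratedFDeriv ℝ k h) p :=
      (hh.differentiable_iteratedFDeriv (by exact_mod_cast ENat.natCast_lt_top k)) p
    rw [e, ((ContinuousMultilinearMap.apply ℝ (fun _ : Fin k => E) F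
      (Fin.tail m)).hasFDerivAt.comp p hd.hasFDerivAt).fderiv]
    rfl

/-- Partial iterated derivative along the range of `ι`. -/
noncomputable def NN (ι : V →L[ℝ] E) (k : ℕ) (h : E → F) (p : E) :
    ContinuousMultilinearMap ℝ (fun _ : Fin k => V) F :=
  (iteratedFDeriv ℝ k h p).compContinuousLinearMap (fun _ => ι)

lemma NN_contDiff (ι : V →L[ℝ] E) (k : ℕ) {h : E → F} (hh : ContDiff ℝ ∞ h) :
    ContDiff ℝ ∞ (NN ι k h) := by
  have h1 : ContDiff ℝ ∞ (iteratedFDeriv ℝ k h) := hh.iteratedFDeriv_right (by exact_mod_cast le_top)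
  let Φ : ContinuousMultilinearMap ℝ (fun _ : Fin k => E) F →L[ℝ]
      ContinuousMultilinearMap ℝ (fun _ : Fin k => V) F :=
    ContinuousMultilinearMap.compContinuousLinearMapL (fun _ : Fin k => ι)
  exact Φ.contDiff.comp h1

lemma NN_spec (ι : V →L[ℝ] E) (k : ℕ) {h : E → F} (hh : ContDiff ℝ ∞ h) (c : E) (v : V) :
    iteratedFDeriv ℝ k (fun v => h (c + ι v)) v = NN ι k h (c + ι v) := by
  have h1 : ContDiff ℝ ∞ (fun q => h (c + q)) := hh.comp (contDiff_const.add contDiff_id)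
  have := ι.iteratedFDeriv_comp_right h1 v (i := k) (by exact_mod_cast le_top)
  change iteratedFDeriv ℝ k ((fun q => h (c + q)) ∘ ι) v = _
  rw [this, iteratedFDeriv_comp_add_left]
  rfl

lemma NN_apply (ι : V →L[ℝ] E) (k : ℕ) {h : E → F} (hh : ContDiff ℝ ∞ h) (p : E)
    (m : Fin k → V) : NN ι k h p m = DD ((List.ofFn m).map ι) h p := by
  change iteratedFDeriv ℝ k h p (fun i => ι (m i)) = _
  rw [iteratedFDeriv_eq_DD k hh]
  congr 1
  simp [List.map_ofFn, Function.comp_def]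

end general

end TripleSymbol
namespace TripleSymbol

/-- Shorthand for Euclidean space. -/
abbrev Eu (d : ℕ) := EuclideanSpace ℝ (Fin d)

/-- The total space. -/
abbrev Tot (n d₁ d₂ d₃ : ℕ) := Eu n × Eu d₁ × Eu d₂ × Eu d₃

section concrete

variable {n d₁ d₂ d₃ : ℕ}

/-- Inclusions of the four factors. -/
noncomputable def i0 : Eu n →L[ℝ] Tot n d₁ d₂ d₃ := ContinuousLinearMap.inl ℝ _ _
noncomputable def i1 : Eu d₁ →L[ℝ] Tot n d₁ d₂ d₃ :=
  (ContinuousLinearMap.inr ℝ _ _).comp (ContinuousLinearMap.inl ℝ _ _)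
noncomputable def i2 : Eu d₂ →L[ℝ] Tot n d₁ d₂ d₃ :=
  (ContinuousLinearMap.inr ℝ _ _).comp
    ((ContinuousLinearMap.inr ℝ _ _).comp (ContinuousLinearMap.inl ℝ _ _))
noncomputable def i3 : Eu d₃ →L[ℝ] Tot n d₁ d₂ d₃ :=
  (ContinuousLinearMap.inr ℝ _ _).comp
    ((ContinuousLinearMap.inr ℝ _ _).comp (ContinuousLinearMap.inr ℝ _ _))

@[simp] lemma i0_apply (v : Eu n) : (i0 v : Tot n d₁ d₂ d₃) = (v, 0, 0, 0) := rfl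
@[simp] lemma i1_apply (v : Eu d₁) : (i1 v : Tot n d₁ d₂ d₃) = (0, v, 0, 0) := rfl
@[simp] lemma i2_apply (v : Eu d₂) : (i2 v : Tot n d₁ d₂ d₃) = (0, 0, v, 0) := rfl
@[simp] lemma i3_apply (v : Eu d₃) : (i3 v : Tot n d₁ d₂ d₃) = (0, 0, 0, v) := rfl

lemma nested_eq {F : Type*} [NormedAddCommGroup F] [NormedSpace ℝ F]
    {h : Tot n d₁ d₂ d₃ → F} (hh : ContDiff ℝ ∞ h) (γ α β η : ℕ)
    (x : Eu n) (ξ' : Eu d₁) (ξ'' : Eu d₂) (ξ''' : Eu d₃) :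
    iteratedFDeriv ℝ γ (fun x => iteratedFDeriv ℝ α (fun ξ' =>
          iteratedFDeriv ℝ β (fun ξ'' => iteratedFDeriv ℝ η (fun ξ''' =>
            h (x, ξ', ξ'', ξ''')) ξ''') ξ'') ξ') x
      = NN i0 γ (NN i1 α (NN i2 β (NN i3 η h))) (x, ξ', ξ'', ξ''') := by
  have e3 : ∀ x ξ' ξ'' ξ''', iteratedFDeriv ℝ η (fun ξ''' => h (x, ξ', ξ'', ξ''')) ξ'''
      = NN i3 η h (x, ξ', ξ'', ξ''') := by
    intro x ξ' ξ'' ξ'''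
    simpa using NN_spec i3 η hh (x, ξ', ξ'', 0) ξ'''
  have h3 := NN_contDiff (i3 : Eu d₃ →L[ℝ] Tot n d₁ d₂ d₃) η hh
  have e2 : ∀ x ξ' ξ'' ξ''', iteratedFDeriv ℝ β (fun ξ'' => NN i3 η h (x, ξ', ξ'', ξ''')) ξ''
      = NN i2 β (NN i3 η h) (x, ξ', ξ'', ξ''') := by
    intro x ξ' ξ'' ξ'''
    simpa using NN_spec i2 β h3 (x, ξ', 0, ξ''') ξ''
  have h2 := NN_contDiff (i2 : Eu d₂ →L[ℝ] Tot n d₁ d₂ d₃) β h3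
  have e1 : ∀ x ξ' ξ'' ξ''',
      iteratedFDeriv ℝ α (fun ξ' => NN i2 β (NN i3 η h) (x, ξ', ξ'', ξ''')) ξ'
      = NN i1 α (NN i2 β (NN i3 η h)) (x, ξ', ξ'', ξ''') := by
    intro x ξ' ξ'' ξ'''
    simpa using NN_spec i1 α h2 (x, 0, ξ'', ξ''') ξ'
  have h1 := NN_contDiff (i1 : Eu d₁ →L[ℝ] Tot n d₁ d₂ d₃) α h2
  have e0 : iteratedFDeriv ℝ γ (fun x => NN i1 α (NN i2 β (NN i3 η h)) (x, ξ', ξ'', ξ''')) x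
      = NN i0 γ (NN i1 α (NN i2 β (NN i3 η h))) (x, ξ', ξ'', ξ''') := by
    simpa using NN_spec i0 γ h1 (0, ξ', ξ'', ξ''') x
  simp_rw [e3, e2, e1, e0]

lemma nested_apply {F : Type*} [NormedAddCommGroup F] [NormedSpace ℝ F]
    {h : Tot n d₁ d₂ d₃ → F} (hh : ContDiff ℝ ∞ h) (γ α β η : ℕ) (p : Tot n d₁ d₂ d₃)
    (m0 : Fin γ → Eu n) (m1 : Fin α → Eu d₁) (m2 : Fin β → Eu d₂) (m3 : Fin η → Eu d₃) :
    NN i0 γ (NN i1 α (NN i2 β (NN i3 η h))) p m0 m1 m2 m3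
      = DD ((List.ofFn m0).map i0 ++ ((List.ofFn m1).map i1 ++
          ((List.ofFn m2).map i2 ++ (List.ofFn m3).map i3))) h p := by
  have h3 := NN_contDiff (i3 : Eu d₃ →L[ℝ] Tot n d₁ d₂ d₃) η hh
  have h2 := NN_contDiff (i2 : Eu d₂ →L[ℝ] Tot n d₁ d₂ d₃) β h3
  have h1 := NN_contDiff (i1 : Eu d₁ →L[ℝ] Tot n d₁ d₂ d₃) α h2
  have e3 : (fun p => NN i3 η h p m3) = DD ((List.ofFn m3).map i3) h := by
    funext p; exact NN_apply _ _ hh p m3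
  have e2 : (fun p => NN i2 β (NN i3 η h) p m2 m3)
      = DD ((List.ofFn m2).map i2 ++ (List.ofFn m3).map i3) h := by
    rw [DD_append, ← e3]
    funext p
    rw [NN_apply _ _ h3]
    exact (congrFun (DD_clm (ContinuousMultilinearMap.apply ℝ _ _ m3) _ h3) p).symm
  have e1 : (fun p => NN i1 α (NN i2 β (NN i3 η h)) p m1 m2 m3)
      = DD ((List.ofFn m1).map i1 ++ ((List.ofFn m2).map i2 ++ (List.ofFn m3).map i3)) h := by
    rw [DD_append, ← e2]
    funext p
    rw [NN_apply _ _ h2]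
    exact (congrFun (DD_clm ((ContinuousMultilinearMap.apply ℝ _ _ m3).comp
      (ContinuousMultilinearMap.apply ℝ _ _ m2)) _ h2) p).symm
  rw [DD_append, ← e1, NN_apply _ _ h1]
  let Λ1 := ContinuousMultilinearMap.apply ℝ (fun _ : Fin α => Eu d₁)
    (ContinuousMultilinearMap ℝ (fun _ : Fin β => Eu d₂)
      (ContinuousMultilinearMap ℝ (fun _ : Fin η => Eu d₃) F)) m1
  let Λ2 := ContinuousMultilinearMap.apply ℝ (fun _ : Fin β => Eu d₂)
      (ContinuousMultilinearMap ℝ (fun _ : Fin η => Eu d₃) F) m2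
  let Λ3 := ContinuousMultilinearMap.apply ℝ (fun _ : Fin η => Eu d₃) F m3
  exact (congrFun (DD_clm (Λ3.comp (Λ2.comp Λ1)) _ h1) p).symm

/-- The norm product over a list. -/
noncomputable def np {V : Type*} [Norm V] (l : List V) : ℝ := (l.map (fun v => ‖v‖)).prod

lemma np_ofFn {V : Type*} [Norm V] {k : ℕ} (m : Fin k → V) :
    np (List.ofFn m) = ∏ i, ‖m i‖ := by
  simp [np, List.map_ofFn, List.prod_ofFn]

lemma nested_bound_iff {F : Type*} [NormedAddCommGroup F] [NormedSpace ℝ F]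
    {h : Tot n d₁ d₂ d₃ → F} (hh : ContDiff ℝ ∞ h) (γ α β η : ℕ) (p : Tot n d₁ d₂ d₃)
    {K : ℝ} (hK : 0 ≤ K) :
    ‖NN i0 γ (NN i1 α (NN i2 β (NN i3 η h))) p‖ ≤ K ↔
      ∀ (l0 : List (Eu n)) (l1 : List (Eu d₁)) (l2 : List (Eu d₂)) (l3 : List (Eu d₃)),
        l0.length = γ → l1.length = α → l2.length = β → l3.length = η →
        ‖DD (l0.map i0 ++ (l1.map i1 ++ (l2.map i2 ++ l3.map i3))) h p‖ ≤
          K * np l0 * np l1 * np l2 * np l3 := by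
  constructor
  · rintro H l0 l1 l2 l3 rfl rfl rfl rfl
    have := nested_apply hh _ _ _ _ p l0.get l1.get l2.get l3.get
    simp only [List.ofFn_get] at this
    rw [← this]
    have a0 := ContinuousMultilinearMap.le_of_opNorm_le H l0.get
    have a1 := ContinuousMultilinearMap.le_of_opNorm_le a0 l1.get
    have a2 := ContinuousMultilinearMap.le_of_opNorm_le a1 l2.get
    have a3 := ContinuousMultilinearMap.le_of_opNorm_le a2 l3.get
    simp only [← np_ofFn, List.ofFn_get] at a3
    exact a3
  · intro H
    refine ContinuousMultilinearMap.opNorm_le_bound hK fun m0 => ?_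
    refine ContinuousMultilinearMap.opNorm_le_bound (by positivity) fun m1 => ?_
    refine ContinuousMultilinearMap.opNorm_le_bound (by positivity) fun m2 => ?_
    refine ContinuousMultilinearMap.opNorm_le_bound (by positivity) fun m3 => ?_
    rw [nested_apply hh]
    simp only [← np_ofFn]
    exact H _ _ _ _ (by simp) (by simp) (by simp) (by simp)

/-- Projections onto the factors. -/
def PP : Fin 4 → Tot n d₁ d₂ d₃ → Tot n d₁ d₂ d₃
  | 0, v => (v.1, 0, 0, 0)
  | 1, v => (0, v.2.1, 0, 0)
  | 2, v => (0, 0, v.2.2.1, 0)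
  | 3, v => (0, 0, 0, v.2.2.2)

/-- The brackets. -/
noncomputable def bb : Fin 4 → Tot n d₁ d₂ d₃ → ℝ
  | 0, _ => 1
  | 1, p => jap3 p.2.1 p.2.2.1 p.2.2.2
  | 2, p => jap2 p.2.2.1 p.2.2.2
  | 3, p => jap p.2.2.2

lemma bb_pos (j : Fin 4) (p : Tot n d₁ d₂ d₃) : 0 < bb j p := by
  fin_cases j <;> simp only [bb, jap, jap2, jap3] <;> positivity

lemma sum_PP (v : Tot n d₁ d₂ d₃) : ∑ j, PP j v = v := by
  simp [Fin.sum_univ_four, PP]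

/-- The main weight. -/
noncomputable def WW (M₁ M₂ M₃ : ℝ) (p : Tot n d₁ d₂ d₃) : ℝ :=
  bb 1 p ^ M₁ * bb 2 p ^ M₂ * bb 3 p ^ M₃

lemma WW_pos (M₁ M₂ M₃ : ℝ) (p : Tot n d₁ d₂ d₃) : 0 < WW M₁ M₂ M₃ p := by
  have := bb_pos 1 p
  have := bb_pos 2 p
  have := bb_pos 3 p
  unfold WW; positivity

/-- Weight of a graded vector. -/
noncomputable def qq (p : Tot n d₁ d₂ d₃) (v : Fin 4 × Tot n d₁ d₂ d₃) : ℝ :=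
  (bb v.1 p)⁻¹ * ‖v.2‖

lemma qq_nonneg (p : Tot n d₁ d₂ d₃) (v : Fin 4 × Tot n d₁ d₂ d₃) : 0 ≤ qq p v := by
  have := bb_pos v.1 p
  unfold qq; positivity

/-- Product of the weights of a list of graded vectors. -/
noncomputable def Q (p : Tot n d₁ d₂ d₃) (L : List (Fin 4 × Tot n d₁ d₂ d₃)) : ℝ :=
  (L.map (qq p)).prod

lemma Q_nonneg (p : Tot n d₁ d₂ d₃) (L) : 0 ≤ Q p L := by
  refine List.prod_nonneg ?_
  simp only [List.mem_map]
  rintro _ ⟨v, _, rfl⟩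
  exact qq_nonneg _ _

/-- The projected vector. -/
def pv (v : Fin 4 × Tot n d₁ d₂ d₃) : Tot n d₁ d₂ d₃ := PP v.1 v.2

/-- Graded form of the symbol estimates. -/
def GG (M₁ M₂ M₃ : ℝ) (h : Tot n d₁ d₂ d₃ → ℂ) : Prop :=
  ∀ r : List (Fin 4), ∃ C : ℝ, 0 ≤ C ∧ ∀ L : List (Fin 4 × Tot n d₁ d₂ d₃), L.map Prod.fst = r →
    ∀ p, ‖DD (L.map pv) h p‖ ≤ C * WW M₁ M₂ M₃ p * Q p L

/-- Symbol estimates in nested form. -/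
def SS (M₁ M₂ M₃ : ℝ) (h : Tot n d₁ d₂ d₃ → ℂ) : Prop :=
  ∀ γ α β η : ℕ, ∃ C : ℝ, ∀ x ξ' ξ'' ξ''',
      ‖iteratedFDeriv ℝ γ (fun x => iteratedFDeriv ℝ α (fun ξ' =>
          iteratedFDeriv ℝ β (fun ξ'' => iteratedFDeriv ℝ η (fun ξ''' =>
            h (x, ξ', ξ'', ξ''')) ξ''') ξ'') ξ') x‖ ≤
        C * jap3 ξ' ξ'' ξ''' ^ (M₁ - (α : ℝ)) * jap2 ξ'' ξ''' ^ (M₂ - (β : ℝ)) *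
          jap ξ''' ^ (M₃ - (η : ℝ))

lemma weight_eq (M₁ M₂ M₃ C : ℝ) (α β η : ℕ) (p : Tot n d₁ d₂ d₃) :
    C * jap3 p.2.1 p.2.2.1 p.2.2.2 ^ (M₁ - (α : ℝ)) * jap2 p.2.2.1 p.2.2.2 ^ (M₂ - (β : ℝ)) *
          jap p.2.2.2 ^ (M₃ - (η : ℝ))
      = C * WW M₁ M₂ M₃ p * (((bb 1 p)⁻¹ ^ α) * ((bb 2 p)⁻¹ ^ β) * ((bb 3 p)⁻¹ ^ η)) := by
  have h1 := bb_pos 1 p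
  have h2 := bb_pos 2 p
  have h3 := bb_pos 3 p
  change C * bb 1 p ^ (M₁ - (α : ℝ)) * bb 2 p ^ (M₂ - (β : ℝ)) * bb 3 p ^ (M₃ - (η : ℝ)) = _
  rw [Real.rpow_sub h1, Real.rpow_sub h2, Real.rpow_sub h3, Real.rpow_natCast, Real.rpow_natCast,
    Real.rpow_natCast, WW]
  simp only [inv_pow]
  field_simp

lemma Q_block (p : Tot n d₁ d₂ d₃) {V : Type*} [NormedAddCommGroup V] (j : Fin 4)
    (π : Tot n d₁ d₂ d₃ → V) (hπ : ∀ v, ‖π v‖ ≤ ‖v‖) (L : List (Fin 4 × Tot n d₁ d₂ d₃))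
    (hL : ∀ v ∈ L, v.1 = j) :
    0 ≤ (bb j p)⁻¹ ^ L.length * np (L.map (fun v => π v.2)) ∧
    (bb j p)⁻¹ ^ L.length * np (L.map (fun v => π v.2)) ≤ Q p L := by
  have hb := bb_pos j p
  induction L with
  | nil => simp [np, Q]
  | cons v L ih =>
    obtain ⟨ih0, ih1⟩ := ih (fun w hw => hL w (List.mem_cons_of_mem _ hw))
    have hv : v.1 = j := hL v (by simp)
    have e : (bb j p)⁻¹ ^ (v :: L).length * np ((v :: L).map (fun v => π v.2))
        = ((bb j p)⁻¹ * ‖π v.2‖) * ((bb j p)⁻¹ ^ L.length * np (L.map (fun v => π v.2))) := by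
      simp [np, pow_succ]; ring
    have e' : Q p (v :: L) = qq p v * Q p L := by simp [Q]
    rw [e, e']
    refine ⟨by positivity, mul_le_mul ?_ ih1 ih0 (qq_nonneg _ _)⟩
    rw [qq, hv]
    gcongr
    exact hπ _

lemma perm_split {A : Type*} (L : List (Fin 4 × A)) :
    L.Perm (L.filter (fun v => v.1 = 0) ++ (L.filter (fun v => v.1 = 1) ++
      (L.filter (fun v => v.1 = 2) ++ L.filter (fun v => v.1 = 3)))) := by
  classical
  rw [List.perm_iff_count]
  rintro ⟨j, v⟩
  simp only [List.count_append]
  have key : ∀ k : Fin 4, List.count (j, v) (L.filter (fun v => v.1 = k))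
      = if j = k then List.count (j, v) L else 0 := by
    intro k
    split_ifs with h
    · exact List.count_filter (by simpa using h)
    · rw [List.count_eq_zero]; simp [h]
  simp only [key]
  fin_cases j <;> simp

lemma SS_to_GG {M₁ M₂ M₃ : ℝ} {h : Tot n d₁ d₂ d₃ → ℂ} (hh : ContDiff ℝ ∞ h)
    (H : SS M₁ M₂ M₃ h) : GG M₁ M₂ M₃ h := by
  intro r
  obtain ⟨C, hC⟩ := H (r.count 0) (r.count 1) (r.count 2) (r.count 3)
  refine ⟨|C|, abs_nonneg _, ?_⟩
  rintro L rfl p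
  have hlen : ∀ j : Fin 4, (L.filter (fun v => v.1 = j)).length = (L.map Prod.fst).count j := by
    intro j
    rw [← List.countP_eq_length_filter, List.count, List.countP_map]
    congr 1
  set L0 := L.filter (fun v => v.1 = 0) with hL0
  set L1 := L.filter (fun v => v.1 = 1) with hL1
  set L2 := L.filter (fun v => v.1 = 2) with hL2
  set L3 := L.filter (fun v => v.1 = 3) with hL3
  have hp : L.Perm (L0 ++ (L1 ++ (L2 ++ L3))) := perm_split L
  have m0 : ∀ v ∈ L0, v.1 = 0 := by simp [hL0]
  have m1 : ∀ v ∈ L1, v.1 = 1 := by simp [hL1]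
  have m2 : ∀ v ∈ L2, v.1 = 2 := by simp [hL2]
  have m3 : ∀ v ∈ L3, v.1 = 3 := by simp [hL3]
  have eQ : Q p L = Q p L0 * (Q p L1 * (Q p L2 * Q p L3)) := by
    unfold Q
    rw [(hp.map (qq p)).prod_eq]
    simp
  have q0 := Q_block p 0 (fun v => v.1) (fun v => norm_fst_le v) L0 m0
  have q1 := Q_block p 1 (fun v => v.2.1)
    (fun v => (norm_fst_le v.2).trans (norm_snd_le v)) L1 m1
  have q2 := Q_block p 2 (fun v => v.2.2.1)
    (fun v => (norm_fst_le v.2.2).trans ((norm_snd_le v.2).trans (norm_snd_le v))) L2 m2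
  have q3 := Q_block p 3 (fun v => v.2.2.2)
    (fun v => (norm_snd_le v.2.2).trans ((norm_snd_le v.2).trans (norm_snd_le v))) L3 m3
  have eL : L0.map pv ++ (L1.map pv ++ (L2.map pv ++ L3.map pv))
      = (L0.map (fun v => v.2.1)).map i0 ++ ((L1.map (fun v => v.2.2.1)).map i1 ++
        ((L2.map (fun v => v.2.2.2.1)).map i2 ++ (L3.map (fun v => v.2.2.2.2)).map i3)) := by
    simp only [List.map_map]
    congr 1
    · exact List.map_congr_left fun v hv => by simp [pv, m0 v hv, PP]
    congr 1
    · exact List.map_congr_left fun v hv => by simp [pv, m1 v hv, PP]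
    congr 1
    · exact List.map_congr_left fun v hv => by simp [pv, m2 v hv, PP]
    · exact List.map_congr_left fun v hv => by simp [pv, m3 v hv, PP]
  have hW := WW_pos M₁ M₂ M₃ p
  have b1 := bb_pos 1 p
  have b2 := bb_pos 2 p
  have b3 := bb_pos 3 p
  rw [DD_perm (hp.map pv) hh, List.map_append, List.map_append, List.map_append, eL, eQ]
  have B := hC p.1 p.2.1 p.2.2.1 p.2.2.2
  rw [nested_eq hh, weight_eq] at B
  have B' := B.trans (mul_le_mul_of_nonneg_right (mul_le_mul_of_nonneg_right (le_abs_self C) hW.le)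
    (by positivity))
  have := (nested_bound_iff hh _ _ _ _ _ (by positivity)).1 B' (L0.map (fun v => v.2.1))
    (L1.map (fun v => v.2.2.1)) (L2.map (fun v => v.2.2.2.1)) (L3.map (fun v => v.2.2.2.2))
    (by simp [hlen, hL0]) (by simp [hlen, hL1]) (by simp [hlen, hL2]) (by simp [hlen, hL3])
  refine this.trans ?_
  rw [← hlen 1, ← hlen 2, ← hlen 3]
  have z0 : (bb 0 p)⁻¹ = 1 := by simp [bb]
  rw [z0, one_pow, one_mul] at q0
  have k3 := mul_le_mul q2.2 q3.2 q3.1 (Q_nonneg p L2)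
  have k2 := mul_le_mul q1.2 k3 (mul_nonneg q2.1 q3.1) (Q_nonneg p L1)
  have k1 := mul_le_mul q0.2 k2 (mul_nonneg q1.1 (mul_nonneg q2.1 q3.1)) (Q_nonneg p L0)
  refine le_trans (le_of_eq ?_) (mul_le_mul_of_nonneg_left k1
    (mul_nonneg (abs_nonneg C) hW.le))
  ring

lemma np_map_Q {V : Type*} [NormedAddCommGroup V] (p : Tot n d₁ d₂ d₃) (j : Fin 4)
    (ι : V → Tot n d₁ d₂ d₃) (hι : ∀ v, ‖ι v‖ = ‖v‖) (l : List V) :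
    Q p (l.map (fun v => (j, ι v))) = (bb j p)⁻¹ ^ l.length * np l := by
  induction l with
  | nil => simp [Q, np]
  | cons v l ih =>
    simp only [Q, np, List.map_cons, List.prod_cons, List.length_cons] at ih ⊢
    rw [ih, pow_succ]
    simp only [qq, hι]
    ring

lemma GG_to_SS {M₁ M₂ M₃ : ℝ} {h : Tot n d₁ d₂ d₃ → ℂ} (hh : ContDiff ℝ ∞ h)
    (H : GG M₁ M₂ M₃ h) : SS M₁ M₂ M₃ h := by
  intro γ α β η
  obtain ⟨C, hC0, hC⟩ := H (List.replicate γ 0 ++ (List.replicate α 1 ++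
    (List.replicate β 2 ++ List.replicate η 3)))
  refine ⟨C, fun x ξ' ξ'' ξ''' => ?_⟩
  rw [nested_eq hh]
  have hw := weight_eq M₁ M₂ M₃ C α β η (x, ξ', ξ'', ξ''')
  simp only at hw
  rw [hw]
  generalize (x, ξ', ξ'', ξ''') = p
  have hW := WW_pos M₁ M₂ M₃ p
  have b1 := bb_pos 1 p
  have b2 := bb_pos 2 p
  have b3 := bb_pos 3 p
  rw [nested_bound_iff hh _ _ _ _ _ (by positivity)]
  rintro l0 l1 l2 l3 rfl rfl rfl rfl
  have := hC (l0.map (fun v => (0, i0 v)) ++ (l1.map (fun v => (1, i1 v)) ++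
    (l2.map (fun v => (2, i2 v)) ++ l3.map (fun v => (3, i3 v))))) (by
      simp [Function.comp_def]) p
  have e : (l0.map (fun v => ((0 : Fin 4), (i0 v : Tot n d₁ d₂ d₃))) ++
      (l1.map (fun v => (1, i1 v)) ++
    (l2.map (fun v => (2, i2 v)) ++ l3.map (fun v => (3, i3 v))))).map pv
    = l0.map i0 ++ (l1.map i1 ++ (l2.map i2 ++ l3.map i3)) := by
    simp [Function.comp_def, pv, PP]
    rfl
  rw [e] at this
  refine this.trans (le_of_eq ?_)
  have eQ : ∀ A B : List (Fin 4 × Tot n d₁ d₂ d₃), Q p (A ++ B) = Q p A * Q p B := by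
    intro A B; simp [Q]
  rw [eQ, eQ, eQ, np_map_Q p 0 i0 (by simp [Prod.norm_def]), np_map_Q p 1 i1 (by simp [Prod.norm_def]),
    np_map_Q p 2 i2 (by simp [Prod.norm_def]), np_map_Q p 3 i3 (by simp [Prod.norm_def])]
  have z0 : (bb 0 p)⁻¹ = 1 := by simp [bb]
  rw [z0, one_pow, one_mul]
  ring

end concrete

end TripleSymbol
namespace TripleSymbol

section change

variable {n d₁ d₂ d₃ : ℕ}

lemma Q_cons (p : Tot n d₁ d₂ d₃) (v) (L : List (Fin 4 × Tot n d₁ d₂ d₃)) :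
    Q p (v :: L) = qq p v * Q p L := by simp [Q]

lemma Q_append (p : Tot n d₁ d₂ d₃) (A B : List (Fin 4 × Tot n d₁ d₂ d₃)) :
    Q p (A ++ B) = Q p A * Q p B := by simp [Q]

lemma norm_PP_le (j : Fin 4) (v : Tot n d₁ d₂ d₃) : ‖PP j v‖ ≤ ‖v‖ := by
  obtain ⟨a, b, c, d⟩ := v
  fin_cases j <;> simp [PP, Prod.norm_def]

/-- Expansion step: from graded vectors to images of graded vectors under a filtered map. -/
lemma GG_expand {M₁ M₂ M₃ : ℝ} {h : Tot n d₁ d₂ d₃ → ℂ} (hh : ContDiff ℝ ∞ h)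
    (H : GG M₁ M₂ M₃ h) (S : Tot n d₁ d₂ d₃ →L[ℝ] Tot n d₁ d₂ d₃)
    (hS : ∀ j' j : Fin 4, (∀ v, PP j' (S (PP j v)) = 0) ∨
      ∀ p : Tot n d₁ d₂ d₃, bb j p ≤ bb j' p)
    (r : List (Fin 4)) :
    ∀ s : List (Fin 4), ∃ C : ℝ, 0 ≤ C ∧ ∀ A L : List (Fin 4 × Tot n d₁ d₂ d₃),
      A.map Prod.fst = s → L.map Prod.fst = r → ∀ p,
      ‖DD (A.map pv ++ L.map (fun v => S (pv v))) h p‖ ≤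
        C * WW M₁ M₂ M₃ p * (Q p A * Q p L) := by
  induction r with
  | nil =>
    intro s
    obtain ⟨C, hC0, hC⟩ := H s
    refine ⟨C, hC0, fun A L hA hL p => ?_⟩
    obtain rfl : L = [] := by simpa using hL
    simpa [Q] using hC A hA p
  | cons j r ih =>
    intro s
    choose C hC0 hC using fun j' : Fin 4 => ih (s ++ [j'])
    refine ⟨∑ j', C j' * ‖S‖, Finset.sum_nonneg fun j' _ => mul_nonneg (hC0 j') (norm_nonneg _),
      fun A L hA hL p => ?_⟩
    obtain ⟨⟨j0, v⟩, L, rfl⟩ : ∃ v L', L = v :: L' := by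
      cases L with
      | nil => simp at hL
      | cons v L => exact ⟨v, L, rfl⟩
    simp only [List.map_cons, List.cons.injEq] at hL
    obtain ⟨rfl, hL⟩ := hL
    have hW := WW_pos M₁ M₂ M₃ p
    have e := congrFun (DD_sum Finset.univ (fun j' => PP j' (S (PP j0 v))) (A.map pv)
      (L.map (fun v => S (pv v))) hh) p
    rw [sum_PP] at e
    simp only [List.map_cons]
    change ‖DD (A.map pv ++ S (PP j0 v) :: _) h p‖ ≤ _
    rw [e]
    refine (norm_sum_le _ _).trans ?_
    rw [Finset.sum_mul, Finset.sum_mul]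
    refine Finset.sum_le_sum fun j' _ => ?_
    rw [Q_cons]
    have hq := qq_nonneg p (j0, v)
    have hQA := Q_nonneg p A
    have hQL := Q_nonneg p L
    have hCj := hC0 j'
    rcases hS j' j0 with h0 | hb
    · rw [h0, DD_zero _ _ hh, norm_zero]
      positivity
    · have := hC j' (A ++ [(j', S (PP j0 v))]) L (by simp [hA]) hL p
      simp only [List.map_append, List.map_cons, List.map_nil, List.append_assoc,
        List.cons_append, List.nil_append, Q_append] at this
      refine this.trans ?_
      have hq' : Q p [(j', S (PP j0 v))] ≤ ‖S‖ * qq p (j0, v) := by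
        simp only [Q, List.map_cons, List.map_nil, List.prod_cons, List.prod_nil, mul_one, qq]
        have b1 := bb_pos j0 p
        have b2 := bb_pos j' p
        have k1 : (bb j' p)⁻¹ ≤ (bb j0 p)⁻¹ := inv_anti₀ b1 (hb p)
        have k2 : ‖S (PP j0 v)‖ ≤ ‖S‖ * ‖v‖ :=
          (S.le_opNorm _).trans (by gcongr; exact norm_PP_le _ _)
        calc (bb j' p)⁻¹ * ‖S (PP j0 v)‖ ≤ (bb j0 p)⁻¹ * (‖S‖ * ‖v‖) := by gcongr
          _ = _ := by ring
      calc C j' * WW M₁ M₂ M₃ p * (Q p A * Q p [(j', S (PP j0 v))] * Q p L)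
          ≤ C j' * WW M₁ M₂ M₃ p * (Q p A * (‖S‖ * qq p (j0, v)) * Q p L) := by gcongr
        _ = _ := by ring

lemma Q_compare (p p' : Tot n d₁ d₂ d₃) {c : ℝ} (hc : 0 ≤ c)
    (h : ∀ j, bb j p ≤ c * bb j p') (L : List (Fin 4 × Tot n d₁ d₂ d₃)) :
    Q p' L ≤ c ^ L.length * Q p L := by
  induction L with
  | nil => simp [Q]
  | cons v L ih =>
    rw [Q_cons, Q_cons, List.length_cons]
    have hq : qq p' v ≤ c * qq p v := by
      unfold qq
      have b1 := bb_pos v.1 p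
      have b2 := bb_pos v.1 p'
      have : (bb v.1 p')⁻¹ ≤ c * (bb v.1 p)⁻¹ := by
        rw [← div_eq_mul_inv, inv_le_iff_one_le_mul₀ b2, div_mul_eq_mul_div, one_le_div b1]
        exact h v.1
      calc _ ≤ (c * (bb v.1 p)⁻¹) * ‖v.2‖ := by gcongr
        _ = _ := by ring
    have := mul_le_mul hq ih (Q_nonneg _ _) (mul_nonneg hc (qq_nonneg _ _))
    refine this.trans (le_of_eq ?_)
    ring

lemma rpow_compare {x y c : ℝ} (hx : 0 < x) (hy : 0 < y) (hc : 0 < c) (h1 : x ≤ c * y)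
    (h2 : y ≤ c * x) (M : ℝ) : x ^ M ≤ c ^ |M| * y ^ M := by
  rcases le_total 0 M with hM | hM
  · rw [abs_of_nonneg hM, ← Real.mul_rpow hc.le hy.le]
    exact Real.rpow_le_rpow hx.le h1 hM
  · rw [abs_of_nonpos hM]
    have : (c * x) ^ M ≤ y ^ M := Real.rpow_le_rpow_of_nonpos hy h2 hM
    rw [Real.mul_rpow hc.le hx.le] at this
    rw [Real.rpow_neg hc.le, ← div_eq_inv_mul, le_div_iff₀ (by positivity)]
    linarith

lemma WW_compare (M₁ M₂ M₃ : ℝ) {c : ℝ} (hc : 0 < c) (p p' : Tot n d₁ d₂ d₃)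
    (h : ∀ j, bb j p ≤ c * bb j p') (h' : ∀ j, bb j p' ≤ c * bb j p) :
    WW M₁ M₂ M₃ p' ≤ c ^ |M₁| * c ^ |M₂| * c ^ |M₃| * WW M₁ M₂ M₃ p := by
  have k1 := rpow_compare (bb_pos 1 p') (bb_pos 1 p) hc (h' 1) (h 1) M₁
  have k2 := rpow_compare (bb_pos 2 p') (bb_pos 2 p) hc (h' 2) (h 2) M₂
  have k3 := rpow_compare (bb_pos 3 p') (bb_pos 3 p) hc (h' 3) (h 3) M₃
  have a1 := bb_pos 1 p
  have a2 := bb_pos 2 p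
  have a3 := bb_pos 3 p
  have a1 := bb_pos 1 p'
  have a2 := bb_pos 2 p'
  have a3 := bb_pos 3 p'
  unfold WW
  calc _ ≤ (c ^ |M₁| * bb 1 p ^ M₁) * (c ^ |M₂| * bb 2 p ^ M₂) * (c ^ |M₃| * bb 3 p ^ M₃) := by
        gcongr
    _ = _ := by ring

lemma GG_change {M₁ M₂ M₃ : ℝ} {h : Tot n d₁ d₂ d₃ → ℂ} (hh : ContDiff ℝ ∞ h)
    (H : GG M₁ M₂ M₃ h) (S : Tot n d₁ d₂ d₃ →L[ℝ] Tot n d₁ d₂ d₃)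
    (hS : ∀ j' j : Fin 4, (∀ v, PP j' (S (PP j v)) = 0) ∨
      ∀ p : Tot n d₁ d₂ d₃, bb j p ≤ bb j' p)
    {c : ℝ} (hc : 0 < c) (h1 : ∀ p j, bb j p ≤ c * bb j (S p))
    (h2 : ∀ p j, bb j (S p) ≤ c * bb j p) :
    GG M₁ M₂ M₃ (fun p => h (S p)) := by
  intro r
  obtain ⟨C, hC0, hC⟩ := GG_expand hh H S hS r []
  refine ⟨C * (c ^ |M₁| * c ^ |M₂| * c ^ |M₃|) * c ^ r.length, by positivity, fun L hL p => ?_⟩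
  rw [DD_comp S _ hh, List.map_map]
  have := hC [] L rfl hL (S p)
  simp only [List.map_nil, List.nil_append] at this
  refine (this.trans ?_)
  have hQ := Q_compare p (S p) hc.le (h1 p) L
  have hWc := WW_compare M₁ M₂ M₃ hc p (S p) (h1 p) (h2 p)
  have e1 : Q (S p) [] = 1 := by simp [Q]
  have hlen : L.length = r.length := by rw [← hL]; simp
  rw [e1, one_mul]
  rw [hlen] at hQ
  have w0 := WW_pos M₁ M₂ M₃ (S p)
  have w1 := WW_pos M₁ M₂ M₃ p
  have q0 := Q_nonneg (S p) L
  calc _ ≤ C * (c ^ |M₁| * c ^ |M₂| * c ^ |M₃| * WW M₁ M₂ M₃ p) * (c ^ r.length * Q p L) := by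
        gcongr
    _ = _ := by ring

/-- Space of frequencies. -/
abbrev Fr (d₁ d₂ d₃ : ℕ) := Eu d₁ × Eu d₂ × Eu d₃

lemma sqrt_compare {A B K : ℝ} (hA : A ≤ K ^ 2 * B) (hK : 0 ≤ K) : √A ≤ K * √B := by
  calc √A ≤ √(K ^ 2 * B) := Real.sqrt_le_sqrt hA
    _ = K * √B := by rw [Real.sqrt_mul (by positivity), Real.sqrt_sq hK]

lemma bb_upper (U : Fr d₁ d₂ d₃ →L[ℝ] Fr d₁ d₂ d₃)
    (hU1 : ∀ p : Fr d₁ d₂ d₃, p.2.1 = 0 → p.2.2 = 0 → (U p).2.1 = 0 ∧ (U p).2.2 = 0)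
    (hU2 : ∀ p : Fr d₁ d₂ d₃, p.2.2 = 0 → (U p).2.2 = 0) :
    ∀ c : ℝ, 1 + 3 * ‖U‖ ≤ c → ∀ (p : Tot n d₁ d₂ d₃) (j : Fin 4),
      bb j ((p.1, U p.2) : Tot n d₁ d₂ d₃) ≤ c * bb j p := by
  intro c hc
  rintro ⟨x, u, v, w⟩ j
  have hK := norm_nonneg U
  set K := ‖U‖ with hKdef
  have hc0 : 0 ≤ c := by linarith
  have hc1 : 1 ≤ c ^ 2 := by nlinarith
  have hc2 : 3 * K ^ 2 ≤ c ^ 2 := by nlinarith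
  have f3 : (U (u, v, w)).2.2 = (U (0, 0, w)).2.2 := by
    have := hU2 (u, v, 0) rfl
    have e : ((u, v, w) : Fr d₁ d₂ d₃) = (u, v, 0) + (0, 0, w) := by simp
    rw [e, map_add]; simp [this]
  have f2 : (U (u, v, w)).2 = (U (0, v, w)).2 := by
    have := hU1 (u, 0, 0) rfl rfl
    have e : ((u, v, w) : Fr d₁ d₂ d₃) = (u, 0, 0) + (0, v, w) := by simp
    rw [e, map_add]; ext1 <;> simp [this]
  have sqm : ∀ a b : ℝ, (max a b) ^ 2 ≤ a ^ 2 + b ^ 2 := by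
    intro a b
    rcases max_cases a b with ⟨h, _⟩ | ⟨h, _⟩ <;> rw [h] <;> nlinarith [sq_nonneg a, sq_nonneg b]
  -- norm of a triple
  have nt : ∀ (a : Eu d₁) (b : Eu d₂) (d : Eu d₃), ‖((a, b, d) : Fr d₁ d₂ d₃)‖ ^ 2
      ≤ ‖a‖ ^ 2 + ‖b‖ ^ 2 + ‖d‖ ^ 2 := by
    intro a b d
    have h1 := sqm ‖a‖ (max ‖b‖ ‖d‖)
    have h2 := sqm ‖b‖ ‖d‖
    simp only [Prod.norm_def]
    linarith
  have up : ∀ (q : Fr d₁ d₂ d₃), ‖(U q).1‖ ^ 2 ≤ K ^ 2 * ‖q‖ ^ 2 ∧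
      ‖(U q).2.1‖ ^ 2 ≤ K ^ 2 * ‖q‖ ^ 2 ∧ ‖(U q).2.2‖ ^ 2 ≤ K ^ 2 * ‖q‖ ^ 2 := by
    intro q
    have hq := U.le_opNorm q
    rw [← hKdef] at hq
    have g1 : ‖(U q).1‖ ≤ K * ‖q‖ := (norm_fst_le (U q)).trans hq
    have g2 : ‖(U q).2.1‖ ≤ K * ‖q‖ := (norm_fst_le (U q).2).trans ((norm_snd_le (U q)).trans hq)
    have g3 : ‖(U q).2.2‖ ≤ K * ‖q‖ := (norm_snd_le (U q).2).trans ((norm_snd_le (U q)).trans hq)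
    rw [← mul_pow]
    exact ⟨by gcongr, by gcongr, by gcongr⟩
  have fin : ∀ N t : ℝ, 0 ≤ N → t ≤ 3 * (K ^ 2 * N) → 1 + t ≤ c ^ 2 * (1 + N) := by
    intro N t hN ht
    nlinarith [mul_le_mul_of_nonneg_right hc2 hN]
  fin_cases j
  · simp only [bb]
    change (1 : ℝ) ≤ c * 1
    linarith
  · change √(1 + ‖(U (u, v, w)).1‖ ^ 2 + ‖(U (u, v, w)).2.1‖ ^ 2 + ‖(U (u, v, w)).2.2‖ ^ 2)
      ≤ c * √(1 + ‖u‖ ^ 2 + ‖v‖ ^ 2 + ‖w‖ ^ 2)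
    refine sqrt_compare ?_ hc0
    obtain ⟨g1, g2, g3⟩ := up (u, v, w)
    have := mul_le_mul_of_nonneg_left (nt u v w) (sq_nonneg K)
    have := fin (‖u‖ ^ 2 + ‖v‖ ^ 2 + ‖w‖ ^ 2)
      (‖(U (u, v, w)).1‖ ^ 2 + ‖(U (u, v, w)).2.1‖ ^ 2 + ‖(U (u, v, w)).2.2‖ ^ 2)
      (by positivity) (by linarith)
    simpa only [add_assoc] using this
  · change √(1 + ‖(U (u, v, w)).2.1‖ ^ 2 + ‖(U (u, v, w)).2.2‖ ^ 2)
      ≤ c * √(1 + ‖v‖ ^ 2 + ‖w‖ ^ 2)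
    refine sqrt_compare ?_ hc0
    rw [f2]
    obtain ⟨g1, g2, g3⟩ := up (0, v, w)
    have := mul_le_mul_of_nonneg_left (nt 0 v w) (sq_nonneg K)
    simp only [norm_zero] at this
    have := fin (‖v‖ ^ 2 + ‖w‖ ^ 2)
      (‖(U (0, v, w)).2.1‖ ^ 2 + ‖(U (0, v, w)).2.2‖ ^ 2)
      (by positivity) (by nlinarith [sq_nonneg ‖(U (0, v, w)).1‖])
    simpa only [add_assoc] using this
  · change √(1 + ‖(U (u, v, w)).2.2‖ ^ 2) ≤ c * √(1 + ‖w‖ ^ 2)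
    refine sqrt_compare ?_ hc0
    rw [f3]
    obtain ⟨g1, g2, g3⟩ := up (0, 0, w)
    have := mul_le_mul_of_nonneg_left (nt 0 0 w) (sq_nonneg K)
    simp only [norm_zero] at this
    exact fin (‖w‖ ^ 2) (‖(U (0, 0, w)).2.2‖ ^ 2)
      (by positivity) (by nlinarith [sq_nonneg ‖(U (0, 0, w)).1‖])

lemma bb_mono (p : Tot n d₁ d₂ d₃) : bb 3 p ≤ bb 2 p ∧ bb 2 p ≤ bb 1 p := by
  constructor
  · simp only [bb, jap, jap2]
    exact Real.sqrt_le_sqrt (by nlinarith [sq_nonneg ‖p.2.2.1‖])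
  · simp only [bb, jap3, jap2]
    exact Real.sqrt_le_sqrt (by nlinarith [sq_nonneg ‖p.2.1‖])

lemma filtered (U : Fr d₁ d₂ d₃ →L[ℝ] Fr d₁ d₂ d₃)
    (hU1 : ∀ p : Fr d₁ d₂ d₃, p.2.1 = 0 → p.2.2 = 0 → (U p).2.1 = 0 ∧ (U p).2.2 = 0)
    (hU2 : ∀ p : Fr d₁ d₂ d₃, p.2.2 = 0 → (U p).2.2 = 0) (j' j : Fin 4) :
    (∀ v : Tot n d₁ d₂ d₃, PP j' (((PP j v).1, U (PP j v).2) : Tot n d₁ d₂ d₃) = 0) ∨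
      ∀ p : Tot n d₁ d₂ d₃, bb j p ≤ bb j' p := by
  have z : U (0, 0, 0) = 0 := map_zero U
  have A : ∀ u, (U (u, 0, 0)).2.1 = 0 := fun u => (hU1 (u, 0, 0) rfl rfl).1
  have B : ∀ u, (U (u, 0, 0)).2.2 = 0 := fun u => (hU1 (u, 0, 0) rfl rfl).2
  have D : ∀ v, (U (0, v, 0)).2.2 = 0 := fun v => hU2 (0, v, 0) rfl
  fin_cases j <;> fin_cases j' <;>
    first
    | (right; intro p; exact le_rfl)
    | (right; intro p; exact (bb_mono p).1)
    | (right; intro p; exact (bb_mono p).2)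
    | (right; intro p; exact (bb_mono p).1.trans (bb_mono p).2)
    | (left; intro v; simp [PP, z, A, B, D]; done)

end change

end TripleSymbol
/-- The class of triple symbol-valued symbols of order `(M₁,M₂,M₃)` is invariant
under invertible linear frequency changes preserving the flag
`ℝ^{d₁}×{0}×{0} ⊆ ℝ^{d₁}×ℝ^{d₂}×{0}`. -/
theorem stmt16 (d₁ d₂ d₃ : ℕ) (hd₁ : 1 ≤ d₁) (hd₂ : 1 ≤ d₂) (hd₃ : 1 ≤ d₃)
    (T : (EuclideanSpace ℝ (Fin d₁) × EuclideanSpace ℝ (Fin d₂) ×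
        EuclideanSpace ℝ (Fin d₃)) ≃ₗ[ℝ]
      (EuclideanSpace ℝ (Fin d₁) × EuclideanSpace ℝ (Fin d₂) ×
        EuclideanSpace ℝ (Fin d₃)))
    (hT1 : (fun p => T p) '' {p | p.2.1 = 0 ∧ p.2.2 = 0} = {p | p.2.1 = 0 ∧ p.2.2 = 0})
    (hT2 : (fun p => T p) '' {p | p.2.2 = 0} = {p | p.2.2 = 0})
    (n : ℕ) (hn : 1 ≤ n) (M₁ M₂ M₃ : ℝ)
    (a : EuclideanSpace ℝ (Fin n) → EuclideanSpace ℝ (Fin d₁) →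
      EuclideanSpace ℝ (Fin d₂) → EuclideanSpace ℝ (Fin d₃) → ℂ)
    (ha_smooth : ContDiff ℝ (⊤ : ℕ∞)
      (fun p : EuclideanSpace ℝ (Fin n) × EuclideanSpace ℝ (Fin d₁) ×
          EuclideanSpace ℝ (Fin d₂) × EuclideanSpace ℝ (Fin d₃) =>
        a p.1 p.2.1 p.2.2.1 p.2.2.2))
    (ha : ∀ γ α β η : ℕ, ∃ C : ℝ, ∀ x ξ' ξ'' ξ''',
      ‖iteratedFDeriv ℝ γ (fun x => iteratedFDeriv ℝ α (fun ξ' =>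
          iteratedFDeriv ℝ β (fun ξ'' => iteratedFDeriv ℝ η (fun ξ''' =>
            a x ξ' ξ'' ξ''') ξ''') ξ'') ξ') x‖ ≤
        C * jap3 ξ' ξ'' ξ''' ^ (M₁ - (α : ℝ)) * jap2 ξ'' ξ''' ^ (M₂ - (β : ℝ)) *
          jap ξ''' ^ (M₃ - (η : ℝ))) :
    ∀ γ α β η : ℕ, ∃ C' : ℝ, ∀ x ξ' ξ'' ξ''',
      ‖iteratedFDeriv ℝ γ (fun x => iteratedFDeriv ℝ α (fun ξ' =>
          iteratedFDeriv ℝ β (fun ξ'' => iteratedFDeriv ℝ η (fun ξ''' =>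
            a x (T (ξ', ξ'', ξ''')).1 (T (ξ', ξ'', ξ''')).2.1
              (T (ξ', ξ'', ξ''')).2.2) ξ''') ξ'') ξ') x‖ ≤
        C' * jap3 ξ' ξ'' ξ''' ^ (M₁ - (α : ℝ)) * jap2 ξ'' ξ''' ^ (M₂ - (β : ℝ)) *
          jap ξ''' ^ (M₃ - (η : ℝ)) := by
  
  have hsm : ContDiff ℝ ∞ (fun p : TripleSymbol.Tot n d₁ d₂ d₃ =>
      a p.1 p.2.1 p.2.2.1 p.2.2.2) := ha_smooth
  have hSS : TripleSymbol.SS M₁ M₂ M₃ (fun p : TripleSymbol.Tot n d₁ d₂ d₃ =>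
      a p.1 p.2.1 p.2.2.1 p.2.2.2) := ha
  have hGG := TripleSymbol.SS_to_GG hsm hSS
  let U : TripleSymbol.Fr d₁ d₂ d₃ →L[ℝ] TripleSymbol.Fr d₁ d₂ d₃ :=
    LinearMap.toContinuousLinearMap T.toLinearMap
  let U' : TripleSymbol.Fr d₁ d₂ d₃ →L[ℝ] TripleSymbol.Fr d₁ d₂ d₃ :=
    LinearMap.toContinuousLinearMap T.symm.toLinearMap
  have hU : ∀ p, U p = T p := fun p => rfl
  have hU' : ∀ p, U' p = T.symm p := fun p => rfl
  have u1 : ∀ p : TripleSymbol.Fr d₁ d₂ d₃, p.2.1 = 0 → p.2.2 = 0 →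
      (U p).2.1 = 0 ∧ (U p).2.2 = 0 := by
    intro p h1 h2
    exact hT1.subset ⟨p, ⟨h1, h2⟩, rfl⟩
  have u2 : ∀ p : TripleSymbol.Fr d₁ d₂ d₃, p.2.2 = 0 → (U p).2.2 = 0 := by
    intro p h2
    exact hT2.subset ⟨p, h2, rfl⟩
  have v1 : ∀ p : TripleSymbol.Fr d₁ d₂ d₃, p.2.1 = 0 → p.2.2 = 0 →
      (U' p).2.1 = 0 ∧ (U' p).2.2 = 0 := by
    intro p h1 h2
    obtain ⟨q, hq, rfl⟩ := hT1.superset (show p ∈ {p | p.2.1 = 0 ∧ p.2.2 = 0} from ⟨h1, h2⟩)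
    simpa [hU'] using hq
  have v2 : ∀ p : TripleSymbol.Fr d₁ d₂ d₃, p.2.2 = 0 → (U' p).2.2 = 0 := by
    intro p h2
    obtain ⟨q, hq, rfl⟩ := hT2.superset (show p ∈ {p | p.2.2 = 0} from h2)
    simpa [hU'] using hq
  let S : TripleSymbol.Tot n d₁ d₂ d₃ →L[ℝ] TripleSymbol.Tot n d₁ d₂ d₃ :=
    (ContinuousLinearMap.id ℝ _).prodMap U
  have hS : ∀ p, S p = (p.1, U p.2) := fun p => rfl
  let c : ℝ := 1 + 3 * ‖U‖ + 3 * ‖U'‖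
  have n1 := norm_nonneg U
  have n2 := norm_nonneg U'
  have hG := TripleSymbol.GG_change hsm hGG S (TripleSymbol.filtered U u1 u2)
    (c := c) (by positivity) (by
      intro p j
      have := TripleSymbol.bb_upper U' v1 v2 c (by simp only [c]; linarith) (S p) j
      have e : (((S p).1, U' (S p).2) : TripleSymbol.Tot n d₁ d₂ d₃) = p := by
        simp [hS, hU, hU']
      rwa [e] at this)
    (fun p j => TripleSymbol.bb_upper U u1 u2 c (by simp only [c]; linarith) p j)
  have key : (fun p : TripleSymbol.Tot n d₁ d₂ d₃ =>
      (fun p : TripleSymbol.Tot n d₁ d₂ d₃ => a p.1 p.2.1 p.2.2.1 p.2.2.2) (S p))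
      = fun p => a p.1 (T p.2).1 (T p.2).2.1 (T p.2).2.2 := by
    funext p
    simp only [hS, hU]
  have hsm' := hsm.comp S.contDiff
  rw [key] at hG
  change ContDiff ℝ ∞ (fun p : TripleSymbol.Tot n d₁ d₂ d₃ =>
      (fun p : TripleSymbol.Tot n d₁ d₂ d₃ => a p.1 p.2.1 p.2.2.1 p.2.2.2) (S p)) at hsm'
  rw [key] at hsm'
  have hF := TripleSymbol.GG_to_SS hsm' hG
  unfold TripleSymbol.SS at hF
  clear_value S c U U'
  exact hF
end
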